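/- arXiv:1812.04705 — 3 statements merged into one kernel-verified Lean document; each statement's English description precedes it below -/
import Mathlib

section
/- Let β = (β_1,…,β_{ℓ(β)}) be a composition with all parts at least 2 and ℓ(β) ≥ 3. If every 3-element sub-multiset {x,y,z} of the multiset {β_1,…,β_{ℓ(β)}} with x ≤ y ≤ z satisfies the strict triangle inequality z < x + y, then the connected ribbon R_β has full Schur support: [R_β] = [β^+, (|β|−ℓ(β)+1, ℓ(β)−1)], where β^+ is the weakly decreasing rearrangement of β. -/
namespace RibbonSupport

/-- A partition: a weakly decreasing list of positive integers. -/
def IsPartition (a : List ℕ) : Prop := a.Pairwise (· ≥ ·) ∧ ∀ x ∈ a, 0 < x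

/-- All parts of the list are at least `m`. -/
def PartsGE (a : List ℕ) (m : ℕ) : Prop := ∀ x ∈ a, m ≤ x

/-- Dominance order `lam ⪯ mu` on partitions of the same size. -/
def DomLE (lam mu : List ℕ) : Prop :=
  lam.sum = mu.sum ∧ ∀ i, (lam.take i).sum ≤ (mu.take i).sum

/-- The number of nonzero parts. -/
def lenp (p : List ℕ) : ℕ := p.countP (fun x => decide (x ≠ 0))

/-- `p` is an overlapping partition for the monotone ribbon with row lengths `a`:
`p` has the same length as `a`, its last entry is `0`, and consecutive entries
decrease by `0` or `1`. -/
def IsOverlapSeq (a p : List ℕ) : Prop :=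
  p.length = a.length ∧ p.getD (a.length - 1) 0 = 0 ∧
    ∀ i, i + 1 < a.length →
      p.getD i 0 = p.getD (i + 1) 0 ∨ p.getD i 0 = p.getD (i + 1) 0 + 1

/-- Rows `i` and `i+1` (0-based, top to bottom) of `R_a^p` overlap
(share exactly one column) exactly when `p_i = p_{i+1} + 1`. -/
def ovOf (p : List ℕ) : ℕ → Bool := fun i => decide (p.getD i 0 = p.getD (i + 1) 0 + 1)

def rowOffset (a : List ℕ) (i : ℕ) : ℕ := (a.take i).sum

/-- `w` is the reading word (rows right-to-left, top to bottom) of a semistandard filling of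
the ribbon with row lengths `a` (top to bottom) in which consecutive rows `i`, `i+1` share
exactly one column when `ov i = true` and no column otherwise.  Semistandardness amounts to:
within each row block the word is weakly decreasing (rows weakly increase left to right), and
at each overlapping gap the word strictly increases (columns strictly increase downwards). -/
def IsRibbonWord (a : List ℕ) (ov : ℕ → Bool) (w : List ℕ) : Prop :=
  w.length = a.sum ∧
  (∀ i j, i < a.length → j + 1 < a.getD i 0 →
    w.getD (rowOffset a i + j + 1) 0 ≤ w.getD (rowOffset a i + j) 0) ∧
  (∀ i, i + 1 < a.length → ov i = true →
    w.getD (rowOffset a (i + 1) - 1) 0 < w.getD (rowOffset a (i + 1)) 0)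

/-- Yamanouchi (lattice) word: each prefix has at least as many letters `j` as `j+1`. -/
def IsYam (w : List ℕ) : Prop := ∀ k j, (w.take k).count (j + 2) ≤ (w.take k).count (j + 1)

/-- The word `w` has content `nu` (and only positive letters). -/
def HasContent (w : List ℕ) (nu : List ℕ) : Prop :=
  (∀ j, w.count (j + 1) = nu.getD j 0) ∧ w.count 0 = 0

/-- There is an LR filling of the ribbon `(a, ov)` with content `nu`. -/
def InSupportOv (a : List ℕ) (ov : ℕ → Bool) (nu : List ℕ) : Prop :=
  ∃ w : List ℕ, IsRibbonWord a ov w ∧ IsYam w ∧ HasContent w nu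

/-- `nu` is in the Schur support of the monotone ribbon `R_a^p`. -/
def InSupport (a p nu : List ℕ) : Prop := InSupportOv a (ovOf p) nu

/-- `nu` is in the Schur support of the connected ribbon `R_a`. -/
def InSupportConn (a nu : List ℕ) : Prop := InSupportOv a (fun _ => true) nu

/-- `nu` belongs to the Schur interval `[a, (|a| - p₁, p₁)]` in dominance order. -/
def InInterval (a p nu : List ℕ) : Prop :=
  DomLE a nu ∧ DomLE nu [a.sum - p.getD 0 0, p.getD 0 0]

/-- The Schur support of `R_a^p`, as a set of partitions. -/
def SupportSet (a p : List ℕ) : Set (List ℕ) := {nu | IsPartition nu ∧ InSupport a p nu}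

/-- The Schur interval of `R_a^p`, as a set of partitions. -/
def IntervalSet (a p : List ℕ) : Set (List ℕ) := {nu | IsPartition nu ∧ InInterval a p nu}

/-- `R_a^p` has full Schur support. -/
def FullSupport (a p : List ℕ) : Prop := SupportSet a p = IntervalSet a p

/-- The Schur support of the connected ribbon `R_a`, as a set of partitions. -/
def SupportSetConn (a : List ℕ) : Set (List ℕ) := {nu | IsPartition nu ∧ InSupportConn a nu}

/-- `ϱ_i` (1-based `i`): `Σ_{q=i+1}^{ℓ(a)} a_q − p_{i+1} + 1`. -/
def rho (a p : List ℕ) (i : ℕ) : ℕ := (a.drop i).sum + 1 - p.getD i 0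

/-- Entry `j` (1-based) of the `i`-witness vector: `[ϱ_i − a_j]₊`. -/
def wit (a p : List ℕ) (i j : ℕ) : ℕ := rho a p i - a.getD (j - 1) 0

/-- Size of the `i`-witness vector. -/
def witSize (a p : List ℕ) (i : ℕ) : ℕ := ∑ j ∈ Finset.Icc 1 i, wit a p i j

/-! ### Tableaux -/

/-- Cells (0-based `(row, column)`) of the Young diagram of `lam`. -/
def cells (lam : List ℕ) : Finset (ℕ × ℕ) :=
  (Finset.range lam.length ×ˢ Finset.range (lam.sum + 1)).filter
    (fun x => x.2 < lam.getD x.1 0)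

/-- `T` is a semistandard Young tableau of shape `lam` and content `al`
(normalized to vanish off the diagram). -/
def IsTab (lam al : List ℕ) (T : ℕ × ℕ → ℕ) : Prop :=
  (∀ x, x ∉ cells lam → T x = 0) ∧
  (∀ x ∈ cells lam, 1 ≤ T x) ∧
  (∀ i c, (i, c + 1) ∈ cells lam → T (i, c) ≤ T (i, c + 1)) ∧
  (∀ i c, (i + 1, c) ∈ cells lam → T (i, c) < T (i + 1, c)) ∧
  (∀ k, ((cells lam).filter (fun x => T x = k + 1)).card = al.getD k 0)

/-- Standardization of a tableau: entries are renumbered `1, …, N` in increasing order of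
value, entries of equal value being numbered from southwest to northeast (by column). -/
def stdz (lam : List ℕ) (T : ℕ × ℕ → ℕ) : ℕ × ℕ → ℕ := fun x =>
  if x ∈ cells lam then
    ((cells lam).filter (fun y => T y < T x ∨ (T y = T x ∧ y.2 < x.2))).card + 1
  else 0

/-- `n` is a descent of the standard tableau `U`: the entry `n+1` lies in a strictly
lower row than the entry `n`. -/
def IsDescent (lam : List ℕ) (U : ℕ × ℕ → ℕ) (n : ℕ) : Prop :=
  ∃ x ∈ cells lam, ∃ y ∈ cells lam, U x = n ∧ U y = n + 1 ∧ x.1 < y.1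

/-- `S(al)`: the set of proper partial sums of the composition `al`. -/
def Sset (al : List ℕ) : Set ℕ := {n | ∃ k, 0 < k ∧ k < al.length ∧ n = (al.take k).sum}

/-- `s ∈ D(T)`: some entry `s+1` of `T` lies in a strictly lower row than some entry `s`. -/
def TabDescent (lam : List ℕ) (T : ℕ × ℕ → ℕ) (s : ℕ) : Prop :=
  ∃ x ∈ cells lam, ∃ y ∈ cells lam, T x = s ∧ T y = s + 1 ∧ x.1 < y.1

/-- The word `w_{T̂}` of `T`: its `u`-th letter (1-based) is the 1-based row index of the
entry `u` of the standardization `T̂` of `T`. -/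
def wordOf (lam : List ℕ) (T : ℕ × ℕ → ℕ) : List ℕ :=
  (List.range lam.sum).map fun n =>
    ∑ x ∈ (cells lam).filter (fun x => stdz lam T x = n + 1), (x.1 + 1)

/-- `j ∈ {2, …, ℓ(al)}` is a critical number of `T ∈ Tab(lam, al)`:
`w_{α_1+⋯+α_{j-1}} = w_{α_1+⋯+α_{j-1}+1}` in the word of `T`. -/
def CriticalNum (lam al : List ℕ) (T : ℕ × ℕ → ℕ) (j : ℕ) : Prop :=
  2 ≤ j ∧ j ≤ al.length ∧
    (wordOf lam T).getD ((al.take (j - 1)).sum - 1) 0 =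
      (wordOf lam T).getD ((al.take (j - 1)).sum) 0

/-- `j ∈ {2, …, ℓ(al)}` is a negligible critical number of `T`:
`w_{α_1+⋯+α_{j-1}} > w_{α_1+⋯+α_{j-1}+1}` in the word of `T`. -/
def NegligibleNum (lam al : List ℕ) (T : ℕ × ℕ → ℕ) (j : ℕ) : Prop :=
  2 ≤ j ∧ j ≤ al.length ∧
    (wordOf lam T).getD ((al.take (j - 1)).sum) 0 <
      (wordOf lam T).getD ((al.take (j - 1)).sum - 1) 0

/-- The overlapping partition of the ribbon encoded by its gap pattern `b`
(`b j = true` iff rows `j` and `j+1`, 0-based, overlap). -/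
def povOf (b : List Bool) : List ℕ :=
  (List.range (b.length + 1)).map fun i => (b.drop i).count true

/-! ### Connected ribbons with rows in arbitrary order -/

/-- Starting column (0-based) of row `i` of the connected ribbon with row lengths `b`. -/
def startConn (b : List ℕ) (i : ℕ) : ℕ := (b.drop (i + 1)).sum + (i + 1) - b.length

/-- Number of columns of the connected ribbon with row lengths `b`. -/
def ncols (b : List ℕ) : ℕ := b.sum + 1 - b.length

/-- Length of column `c` of the connected ribbon with row lengths `b`. -/
def colLen (b : List ℕ) (c : ℕ) : ℕ :=
  ((Finset.range b.length).filter
    (fun i => startConn b i ≤ c ∧ c < startConn b i + b.getD i 0)).card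

/-- Deletion rank of row `j`: the number of rows deleted strictly before row `j` when one
repeatedly deletes a longest remaining row in highest (most northern) position. -/
def delRank (g : List ℕ) (j : ℕ) : ℕ :=
  ((Finset.range g.length).filter
    (fun j' => g.getD j 0 < g.getD j' 0 ∨ (g.getD j' 0 = g.getD j 0 ∧ j' < j))).card

/-- The overlapping partition of the connected ribbon with row lengths `g`:
its `(d+1)`-st entry is the number of length-two columns of the ribbon remaining
after deleting `d` rows as above, i.e. the number of adjacent pairs of surviving rows. -/
def ppiList (g : List ℕ) : List ℕ :=
  (List.range g.length).map fun d =>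
    ((Finset.range (g.length - 1)).filter
      (fun j => d ≤ delRank g j ∧ d ≤ delRank g (j + 1))).card


/-! ### Words, strips, blocks -/

/-- `w` is an LR word for the connected ribbon `b` with content function `ν`. -/
structure Good (b : List ℕ) (ν : ℕ → ℕ) (w : List ℕ) : Prop where
  rib : IsRibbonWord b (fun _ => true) w
  yam : IsYam w
  cnt : ∀ j, w.count (j + 1) = ν j
  zero : w.count 0 = 0

/-- The weakly decreasing block with `d i` letters `i + 1` for `i < r`. -/
def blk (d : ℕ → ℕ) : ℕ → List ℕ
  | 0 => []
  | k + 1 => List.replicate (d k) (k + 1) ++ blk d k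

lemma blk_mem (d : ℕ → ℕ) (r x : ℕ) (h : x ∈ blk d r) : 1 ≤ x ∧ x ≤ r := by
  induction r with
  | zero => simp [blk] at h
  | succ k ih =>
    simp only [blk, List.mem_append, List.mem_replicate] at h
    rcases h with h | h
    · omega
    · have := ih h
      omega

lemma blk_len (d : ℕ → ℕ) (r : ℕ) : (blk d r).length = ∑ i ∈ Finset.range r, d i := by
  induction r with
  | zero => simp [blk]
  | succ k ih => simp [blk, ih, Finset.sum_range_succ, add_comm]

lemma blk_pw (d : ℕ → ℕ) (r : ℕ) : (blk d r).Pairwise (· ≥ ·) := by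
  induction r with
  | zero => simp [blk]
  | succ k ih =>
    rw [blk, List.pairwise_append]
    refine ⟨?_, ih, ?_⟩
    · rw [List.pairwise_replicate]
      right
      exact le_refl _
    · intro a ha c hc
      have := blk_mem d k c hc
      have := List.eq_of_mem_replicate ha
      omega

lemma blk_count_zero (d : ℕ → ℕ) (r : ℕ) : (blk d r).count 0 = 0 := by
  rw [List.count_eq_zero]
  intro h
  have := blk_mem d r 0 h
  omega

lemma blk_count (d : ℕ → ℕ) (r j : ℕ) (h0 : ∀ i, r ≤ i → d i = 0) :
    (blk d r).count (j + 1) = d j := by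
  have key : ∀ r, (blk d r).count (j + 1) = if j < r then d j else 0 := by
    intro r
    induction r with
    | zero => simp [blk]
    | succ k ih =>
      rw [blk, List.count_append, ih, List.count_replicate]
      by_cases h : k = j
      · subst h; simp
      · have : ¬ (k + 1 = j + 1) := by omega
        simp only [beq_iff_eq, this, if_false]
        by_cases h' : j < k
        · simp [h', Nat.lt_succ_of_lt h']
        · have : ¬ j < k + 1 := by omega
          simp [h', this]
  rw [key]
  split_ifs with h
  · rfl
  · exact (h0 j (by omega)).symm

lemma blk_head (d : ℕ → ℕ) (r : ℕ) (hr : 1 ≤ r) (h : 1 ≤ d (r - 1)) :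
    (blk d r).getD 0 0 = r := by
  obtain ⟨k, rfl⟩ : ∃ k, r = k + 1 := ⟨r - 1, by omega⟩
  simp only [Nat.add_sub_cancel] at h
  obtain ⟨n, hn⟩ : ∃ n, d k = n + 1 := ⟨d k - 1, by omega⟩
  simp [blk, hn, List.replicate_succ]

/-- In a weakly decreasing list, the last entry is at most every entry. -/
lemma last_le (l : List ℕ) (h : l.Pairwise (· ≥ ·)) (x : ℕ) (hx : x ∈ l) :
    l.getD (l.length - 1) 0 ≤ x := by
  obtain ⟨i, hi, rfl⟩ := List.getElem_of_mem hx
  rw [List.getD_eq_getElem _ _ (by omega)]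
  rcases Nat.lt_or_ge i (l.length - 1) with h1 | h1
  · exact List.pairwise_iff_getElem.1 h i (l.length - 1) hi (by omega) h1
  · have : i = l.length - 1 := by omega
    simp [this]

lemma pw_of_getD (l : List ℕ)
    (h : ∀ j, j + 1 < l.length → l.getD (j + 1) 0 ≤ l.getD j 0) : l.Pairwise (· ≥ ·) := by
  have : l.IsChain (· ≥ ·) := by
    rw [List.isChain_iff_getElem]
    intro i hi
    have := h i hi
    rwa [List.getD_eq_getElem _ _ hi, List.getD_eq_getElem _ _ (by omega)] at this
  exact List.isChain_iff_pairwise.1 this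

lemma getD_of_pw (l : List ℕ) (h : l.Pairwise (· ≥ ·)) (j : ℕ) (hj : j + 1 < l.length) :
    l.getD (j + 1) 0 ≤ l.getD j 0 := by
  rw [List.getD_eq_getElem _ _ hj, List.getD_eq_getElem _ _ (by omega)]
  exact List.pairwise_iff_getElem.1 h j (j + 1) (by omega) hj (by omega)

lemma take_sum_le (l : List ℕ) (i : ℕ) : (l.take i).sum ≤ l.sum := by
  conv_rhs => rw [← List.take_append_drop i l]
  rw [List.sum_append]
  omega

lemma take_sum_add (l : List ℕ) (i : ℕ) (hi : i < l.length) :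
    (l.take i).sum + l.getD i 0 ≤ l.sum := by
  have := take_sum_le l (i + 1)
  rw [List.sum_take_succ _ _ hi] at this
  rwa [List.getD_eq_getElem _ _ hi]

/-- Peeling off the last row of a connected ribbon. -/
lemma ribbon_snoc (b : List ℕ) (m : ℕ) (w v : List ℕ) (hw : w.length = b.sum)
    (hv : v.length = m) (hm : 1 ≤ m) (hb : ∀ x ∈ b, 2 ≤ x) :
    IsRibbonWord (b ++ [m]) (fun _ => true) (w ++ v) ↔
      IsRibbonWord b (fun _ => true) w ∧ v.Pairwise (· ≥ ·) ∧
        (b ≠ [] → w.getD (b.sum - 1) 0 < v.getD 0 0) := by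
  have off : ∀ i, i ≤ b.length → rowOffset (b ++ [m]) i = rowOffset b i := by
    intro i hi
    simp [rowOffset, List.take_append_of_le_length hi]
  have offL : rowOffset b b.length = b.sum := by simp [rowOffset]
  have gl : ∀ i, i < b.length → (b ++ [m]).getD i 0 = b.getD i 0 := by
    intro i hi
    exact List.getD_append _ _ _ _ hi
  have gm : (b ++ [m]).getD b.length 0 = m := by simp
  have wl : ∀ i, i < b.sum → (w ++ v).getD i 0 = w.getD i 0 := by
    intro i hi
    exact List.getD_append _ _ _ _ (by omega)
  have wr : ∀ j, (w ++ v).getD (b.sum + j) 0 = v.getD j 0 := by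
    intro j
    rw [List.getD_append_right _ _ _ _ (by omega)]
    congr 1
    omega
  have bpos : ∀ i, i < b.length → 2 ≤ b.getD i 0 := by
    intro i hi
    rw [List.getD_eq_getElem _ _ hi]
    exact hb _ (List.getElem_mem hi)
  constructor
  · rintro ⟨h1, h2, h3⟩
    refine ⟨⟨hw, ?_, ?_⟩, ?_, ?_⟩
    · intro i j hi hj
      have := h2 i j (by simp; omega) (by rw [gl i hi]; exact hj)
      have hs := take_sum_add b i hi
      rw [off i hi.le] at this
      unfold rowOffset at this ⊢
      rwa [wl _ (by omega), wl _ (by omega)] at this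
    · intro i hi _
      have h6 := h3 i (by simp; omega) rfl
      have hs := take_sum_add b (i + 1) hi
      have := bpos (i + 1) hi
      rw [off (i + 1) hi.le] at h6
      unfold rowOffset at h6 ⊢
      rwa [wl _ (by omega), wl _ (by omega)] at h6
    · apply pw_of_getD
      intro j hj
      have := h2 b.length j (by simp) (by rw [gm]; omega)
      rw [off _ le_rfl, offL, add_assoc, wr, wr] at this
      exact this
    · intro hne
      have hpos : 0 < b.length := List.length_pos_iff.2 hne
      have h6 := h3 (b.length - 1) (by simp; omega) rfl
      have e : b.length - 1 + 1 = b.length := by omega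
      have hs := take_sum_add b 0 hpos
      have := bpos 0 hpos
      rw [e, off _ le_rfl, offL, wl _ (by omega)] at h6
      have h := wr 0
      rw [add_zero] at h
      omega
  · rintro ⟨⟨h1, h2, h3⟩, h4, h5⟩
    refine ⟨by simp [hw, hv], ?_, ?_⟩
    · intro i j hi hj
      simp only [List.length_append, List.length_singleton] at hi
      rcases Nat.lt_or_ge i b.length with hi' | hi'
      · rw [gl i hi'] at hj
        have := h2 i j hi' hj
        have hs := take_sum_add b i hi'
        rw [off i hi'.le]
        unfold rowOffset at this ⊢
        rwa [wl _ (by omega), wl _ (by omega)]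
      · have : i = b.length := by omega
        subst this
        rw [gm] at hj
        rw [off _ le_rfl, offL, add_assoc, wr, wr]
        exact getD_of_pw v h4 j (by omega)
    · intro i hi _
      simp only [List.length_append, List.length_singleton] at hi
      rcases Nat.lt_or_ge (i + 1) b.length with hi' | hi'
      · have h := h3 i hi' rfl
        have hs := take_sum_add b (i + 1) hi'
        have := bpos (i + 1) hi'
        rw [off (i + 1) hi'.le]
        unfold rowOffset at *
        rwa [wl _ (by omega), wl _ (by omega)]
      · have e : i + 1 = b.length := by omega
        have hs := take_sum_add b 0 (by omega)
        have := bpos 0 (by omega)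
        rw [e, off _ le_rfl, offL, wl _ (by omega)]
        have h := wr 0
        rw [add_zero] at h
        rw [h]
        apply h5
        intro h0
        simp [h0] at e

/-- Appending a horizontal strip `d` to a good word. -/
lemma good_append (b : List ℕ) (m r : ℕ) (ν d : ℕ → ℕ) (w : List ℕ)
    (hm : 1 ≤ m) (hb : ∀ x ∈ b, 2 ≤ x) (hr : 1 ≤ r)
    (h0 : ∀ i, r ≤ i → ν i = 0)
    (hd : ∀ i, d i + ν (i + 1) ≤ ν i) (hsum : ∑ i ∈ Finset.range r, d i = m)
    (hdr : 1 ≤ d (r - 1)) (hw : Good b (fun i => ν i - d i) w)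
    (hlast : b ≠ [] → w.getD (b.sum - 1) 0 < r) :
    Good (b ++ [m]) ν (w ++ blk d r) := by
  have d0 : ∀ i, r ≤ i → d i = 0 := by
    intro i hi
    have := hd i
    have := h0 i hi
    omega
  have hc := blk_count d r
  refine ⟨?_, ?_, ?_, ?_⟩
  · rw [ribbon_snoc b m w _ hw.rib.1 (by rw [blk_len, hsum]) hm hb]
    refine ⟨hw.rib, blk_pw d r, ?_⟩
    intro hne
    rw [blk_head d r hr hdr]
    exact hlast hne
  · intro k j
    rw [List.take_append, List.count_append, List.count_append]
    rcases Nat.lt_or_ge k w.length with hk | hk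
    · have : k - w.length = 0 := by omega
      simp only [this, List.take_zero, List.count_nil, add_zero]
      exact hw.yam k j
    · rw [List.take_of_length_le hk, hw.cnt j, hw.cnt (j + 1)]
      have h1 : ((blk d r).take (k - w.length)).count (j + 2) ≤ d (j + 1) := by
        rw [← hc (j + 1) d0]
        exact (List.take_sublist _ _).count_le _
      have := hd j
      have := hd (j + 1)
      omega
  · intro j
    rw [List.count_append, hw.cnt, hc j d0]
    have := hd j
    omega
  · rw [List.count_append, hw.zero, blk_count_zero]

/-! ### The construction -/

/-- Dominance, phrased through sublists. -/
def Dom (b : List ℕ) (ν : ℕ → ℕ) : Prop :=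
  ∀ s : List ℕ, s.Sublist b → s.sum ≤ ∑ i ∈ Finset.range s.length, ν i

/-- Triangle condition, phrased through sublists. -/
def Tri (b : List ℕ) : Prop :=
  ∀ x y z : ℕ, [x, y, z].Sublist b → z < x + y ∧ y < x + z ∧ x < y + z

/-- Triangle condition with one fixed outside part `c`. -/
def TriC (c : ℕ) (b : List ℕ) : Prop :=
  ∀ x y : ℕ, [x, y].Sublist b → x < c + y ∧ y < c + x

/-- The extra information carried when the last block has to leave the bottom row. -/
def Flag (b : List ℕ) (ν : ℕ → ℕ) (r : ℕ) : Prop :=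
  2 ≤ r ∧ (ν 0 + b.length = b.sum + 1 ∨
    ∃ c, 2 ≤ c ∧ TriC c b ∧ ν (r - 1) + c ≤ ν (r - 2))

/-- The induction hypothesis. -/
def Claim (b : List ℕ) : Prop :=
  ∀ (ν : ℕ → ℕ) (r : ℕ) (fl : Prop), 1 ≤ r → (∀ i, ν (i + 1) ≤ ν i) → (∀ i, r ≤ i → ν i = 0) →
    (∀ i, i < r → 1 ≤ ν i) → ∑ i ∈ Finset.range r, ν i = b.sum → Dom b ν →
    ν 0 + b.length ≤ b.sum + 1 → (fl → Flag b ν r) →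
    ∃ w, Good b ν w ∧ (fl → w.getD (b.sum - 1) 0 < r)

lemma good_last (b : List ℕ) (ν : ℕ → ℕ) (w : List ℕ) (r : ℕ) (hw : Good b ν w)
    (h0 : ∀ i, r ≤ i → ν i = 0) : w.getD (b.sum - 1) 0 ≤ r := by
  by_contra hcon
  have hlt : b.sum - 1 < w.length := by
    by_contra h
    rw [List.getD_eq_default _ _ (by omega)] at hcon
    omega
  rw [List.getD_eq_getElem _ _ hlt] at hcon
  have hmem := List.getElem_mem hlt
  obtain ⟨j, hj⟩ : ∃ j, w[b.sum - 1] = j + 1 := ⟨w[b.sum - 1] - 1, by omega⟩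
  have h1 := hw.cnt j
  rw [h0 j (by omega), List.count_eq_zero, ← hj] at h1
  exact h1 hmem

lemma psum_sub (ν d : ℕ → ℕ) (hd : ∀ i, d i ≤ ν i) (k : ℕ) :
    ∑ i ∈ Finset.range k, (ν i - d i) + ∑ i ∈ Finset.range k, d i
      = ∑ i ∈ Finset.range k, ν i := by
  rw [← Finset.sum_add_distrib]
  apply Finset.sum_congr rfl
  intro i _
  have := hd i
  omega

lemma psum_const (ν : ℕ → ℕ) (r k : ℕ) (h0 : ∀ i, r ≤ i → ν i = 0) (hk : r ≤ k) :
    ∑ i ∈ Finset.range k, ν i = ∑ i ∈ Finset.range r, ν i := by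
  symm
  apply Finset.sum_subset
  · intro i hi
    simp only [Finset.mem_range] at *
    omega
  · intro i _ hi
    apply h0
    simpa using hi

/-- One step of the induction, for an arbitrary admissible strip `d`. -/
lemma step (b : List ℕ) (m r : ℕ) (ν d : ℕ → ℕ) (fl : Prop) (ih : Claim b) (hb : ∀ x ∈ b, 2 ≤ x)
    (hm : 2 ≤ m) (hr : 2 ≤ r) (h0 : ∀ i, r ≤ i → ν i = 0) (hp : ∀ i, i < r → 1 ≤ ν i)
    (htot : ∑ i ∈ Finset.range r, ν i = b.sum + m)
    (hd : ∀ i, d i + ν (i + 1) ≤ ν i) (hsum : ∑ i ∈ Finset.range r, d i = m)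
    (hdr : 1 ≤ d (r - 1)) (hdom : Dom b (fun i => ν i - d i))
    (hE : ν 0 - d 0 + b.length ≤ b.sum + 1)
    (hfl : fl → ∃ i, i < r - 1 ∧ 1 ≤ d i)
    (hF : d (r - 1) < ν (r - 1) → Flag b (fun i => ν i - d i) r) :
    ∃ w, Good (b ++ [m]) ν w ∧ (fl → w.getD ((b ++ [m]).sum - 1) 0 < r) := by
  have d0 : ∀ i, r ≤ i → d i = 0 := by
    intro i hi
    have := hd i
    have := h0 i hi
    omega
  have hdle : ∀ i, d i ≤ ν i := by
    intro i
    have := hd i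
    omega
  have hanti : ∀ i, (fun i => ν i - d i) (i + 1) ≤ (fun i => ν i - d i) i := by
    intro i
    have := hd i
    simp only
    omega
  have hps := psum_sub ν d hdle
  have hlo : ∀ i, i < r - 1 → 1 ≤ ν i - d i := by
    intro i hi
    have := hd i
    have := hp (i + 1) (by omega)
    omega
  have main : ∃ w, Good b (fun i => ν i - d i) w ∧ w.getD (b.sum - 1) 0 < r := by
    by_cases hc : d (r - 1) < ν (r - 1)
    · obtain ⟨w, hw, hl⟩ := ih (fun i => ν i - d i) r True (by omega) hanti
        (by intro i hi; simp [h0 i hi])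
        (by
          intro i hi
          rcases Nat.lt_or_ge i (r - 1) with h | h
          · exact hlo i h
          · have : i = r - 1 := by omega
            subst this
            omega)
        (by have := hps r; omega) hdom hE (fun _ => hF hc)
      exact ⟨w, hw, hl trivial⟩
    · have hz : ∀ i, r - 1 ≤ i → ν i - d i = 0 := by
        intro i hi
        rcases Nat.lt_or_ge i r with h | h
        · have : i = r - 1 := by omega
          subst this
          omega
        · simp [h0 i h]
      obtain ⟨w, hw, hl⟩ := ih (fun i => ν i - d i) (r - 1) False (by omega) hanti
        hz hlo
        (by
          have := hps r
          have h2 := psum_const (fun i => ν i - d i) (r - 1) r hz (by omega)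
          omega) hdom hE (fun h => h.elim)
      have := good_last b _ w (r - 1) hw hz
      exact ⟨w, hw, by omega⟩
  obtain ⟨w, hw, hl⟩ := main
  refine ⟨w ++ blk d r, good_append b m r ν d w (by omega) hb (by omega) h0 hd hsum hdr hw
    (fun _ => hl), ?_⟩
  intro h
  obtain ⟨i, hi, hi1⟩ := hfl h
  have hlen : (blk d r).length = m := by rw [blk_len, hsum]
  have hwl : w.length = b.sum := hw.rib.1
  have hmem : i + 1 ∈ blk d r := by
    rw [← List.count_pos_iff, blk_count d r i d0]
    exact hi1
  have h1 := last_le _ (blk_pw d r) _ hmem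
  rw [List.getD_append_right _ _ _ _ (by simp; omega)]
  have e : (b ++ [m]).sum - 1 - w.length = (blk d r).length - 1 := by
    simp
    omega
  rw [e]
  omega

lemma sum_ge (b : List ℕ) (hb : ∀ x ∈ b, 2 ≤ x) (s : List ℕ) (hs : s.Sublist b) :
    s.sum + 2 * (b.length - s.length) ≤ b.sum := by
  induction hs with
  | slnil => simp
  | @cons l₁ l₂ a h ih =>
    have h1 := ih (fun x hx => hb x (by simp [hx]))
    have h2 := hb a (by simp)
    have := h.length_le
    simp only [List.length_cons, List.sum_cons]
    omega
  | @cons_cons l₁ l₂ a h ih =>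
    have h1 := ih (fun x hx => hb x (by simp [hx]))
    simp only [List.length_cons, List.sum_cons]
    omega

/-- The (capped) greedy strip. -/
def gstrip (ν : ℕ → ℕ) (m t : ℕ) : ℕ → ℕ
  | 0 => m - t
  | i + 1 => min (ν (i + 1)) t - min (ν (i + 1 + 1)) t

lemma gstrip_sum (ν : ℕ → ℕ) (m t k : ℕ) (ha : ∀ i, ν (i + 1) ≤ ν i) (ht1 : t ≤ ν 1)
    (htm : t ≤ m) :
    ∑ i ∈ Finset.range (k + 1), gstrip ν m t i + min (ν (k + 1)) t = m := by
  induction k with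
  | zero =>
    simp [gstrip]
    omega
  | succ k ih =>
    rw [Finset.sum_range_succ]
    have := ha (k + 1)
    have e : gstrip ν m t (k + 1) = min (ν (k + 1)) t - min (ν (k + 1 + 1)) t := rfl
    rw [e]
    omega

lemma step_greedy (b : List ℕ) (m r : ℕ) (ν : ℕ → ℕ) (fl : Prop) (ih : Claim b)
    (hb : ∀ x ∈ b, 2 ≤ x)
    (hm : 2 ≤ m) (hr : 2 ≤ r) (ha : ∀ i, ν (i + 1) ≤ ν i)
    (h0 : ∀ i, r ≤ i → ν i = 0) (hp : ∀ i, i < r → 1 ≤ ν i)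
    (htot : ∑ i ∈ Finset.range r, ν i = b.sum + m) (hD : Dom (b ++ [m]) ν) (hT : Tri (b ++ [m]))
    (t : ℕ) (ht0 : 1 ≤ t) (htm : t ≤ m) (ht1 : t ≤ ν 1)
    (hts : ν 0 + t + b.length ≤ b.sum + m + 1)
    (hcase : t = m ∨ t = ν 1 ∨ ν 0 + t + b.length = b.sum + m + 1)
    (hh : m - t + ν 1 ≤ ν 0) (hfl : fl → min (ν (r - 1)) t < m) :
    ∃ w, Good (b ++ [m]) ν w ∧ (fl → w.getD ((b ++ [m]).sum - 1) 0 < r) := by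
  have hd : ∀ i, gstrip ν m t i + ν (i + 1) ≤ ν i := by
    intro i
    cases i with
    | zero => exact hh
    | succ i =>
      have := ha (i + 1)
      simp only [gstrip]
      omega
  have hdle : ∀ i, gstrip ν m t i ≤ ν i := by
    intro i
    have := hd i
    omega
  have hgs := fun k => gstrip_sum ν m t k ha ht1 htm
  have hmono : Antitone ν := antitone_nat_of_succ_le ha
  have hlast : gstrip ν m t (r - 1) = min (ν (r - 1)) t := by
    obtain ⟨q, rfl⟩ : ∃ q, r = q + 2 := ⟨r - 2, by omega⟩
    have := h0 (q + 2) le_rfl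
    simp [gstrip, this]
  have hsumr : ∑ i ∈ Finset.range r, gstrip ν m t i = m := by
    have := hgs (r - 1)
    have e : r - 1 + 1 = r := by omega
    rw [e, h0 r le_rfl] at this
    omega
  have hps := psum_sub ν _ hdle
  have hpr := hp (r - 1) (by omega)
  apply step b m r ν (gstrip ν m t) fl ih hb hm hr h0 hp htot hd hsumr
  · rw [hlast]
    omega
  · -- dominance
    intro s hs
    rcases Nat.eq_zero_or_pos s.length with hk | hk
    · have := List.length_eq_zero_iff.1 hk
      simp [this]
    obtain ⟨k, hk⟩ : ∃ k, s.length = k + 1 := ⟨s.length - 1, by omega⟩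
    have g := hgs k
    have p := hps (k + 1)
    rw [hk]
    beta_reduce
    rcases le_or_gt (ν (k + 1)) t with h1 | h1
    · have h2 := hD (s ++ [m]) (hs.append (List.Sublist.refl _))
      simp only [List.sum_append, List.length_append, List.length_singleton, hk,
        List.sum_singleton] at h2
      rw [Finset.sum_range_succ] at h2
      omega
    · have hle : ν (k + 1) ≤ ν 1 := hmono (by omega)
      rcases hcase with h | h | h
      · have h2 := hD s (hs.trans (List.sublist_append_left _ _))
        rw [hk] at h2
        omega
      · omega
      · have h3 := sum_ge b hb s hs
        have hkr : k + 1 < r := by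
          by_contra hcon
          have := h0 (k + 1) (by omega)
          omega
        have h4 : ν 0 - gstrip ν m t 0 + k ≤
            ∑ i ∈ Finset.range (k + 1), (ν i - gstrip ν m t i) := by
          rw [Finset.sum_range_succ']
          have : ∑ i ∈ Finset.range k, 1 ≤
              ∑ i ∈ Finset.range k, (ν (i + 1) - gstrip ν m t (i + 1)) := by
            apply Finset.sum_le_sum
            intro i hi
            simp only [Finset.mem_range] at hi
            have := hd (i + 1)
            have := hp (i + 1 + 1) (by omega)
            omega
          simp at this
          omega
        have h5 : gstrip ν m t 0 = m - t := rfl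
        have := hs.length_le
        have := hdle 0
        omega
  · have h5 : gstrip ν m t 0 = m - t := rfl
    rw [h5]
    omega
  · intro h
    have h1 := hfl h
    by_contra hcon
    push Not at hcon
    have hz : ∑ i ∈ Finset.range (r - 1), gstrip ν m t i = 0 := by
      apply Finset.sum_eq_zero
      intro i hi
      have := hcon i (Finset.mem_range.1 hi)
      omega
    have := hgs (r - 2)
    have e : r - 2 + 1 = r - 1 := by omega
    rw [e] at this
    omega
  · intro h
    rw [hlast] at h
    refine ⟨hr, ?_⟩
    have hle : ν (r - 1) ≤ ν 1 := hmono (by omega)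
    rcases hcase with h1 | h1 | h1
    · right
      refine ⟨m, hm, ?_, ?_⟩
      · intro x y hxy
        have := hT x y m (hxy.append (List.Sublist.refl [m]))
        omega
      · simp only [hlast]
        have := hd (r - 2)
        have e : r - 2 + 1 = r - 1 := by omega
        rw [e] at this
        omega
    · omega
    · left
      have h5 : gstrip ν m t 0 = m - t := rfl
      simp only [h5]
      omega

lemma step_mod (b : List ℕ) (m q : ℕ) (ν : ℕ → ℕ) (fl : Prop) (ih : Claim b)
    (hb : ∀ x ∈ b, 2 ≤ x)
    (hm : 2 ≤ m) (ha : ∀ i, ν (i + 1) ≤ ν i)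
    (h0 : ∀ i, q + 2 ≤ i → ν i = 0) (hp : ∀ i, i < q + 2 → 1 ≤ ν i)
    (htot : ∑ i ∈ Finset.range (q + 2), ν i = b.sum + m) (hD : Dom (b ++ [m]) ν)
    (hs : ν 0 + m + b.length ≤ b.sum + m + 1) (hq : m ≤ ν (q + 1))
    (c : ℕ) (hc : 2 ≤ c) (hT : TriC c (b ++ [m])) (hcq : ν (q + 1) + c ≤ ν q) :
    ∃ w, Good (b ++ [m]) ν w ∧ (fl → w.getD ((b ++ [m]).sum - 1) 0 < q + 2) := by
  set d : ℕ → ℕ := fun i => if i = q + 1 then m - 1 else if i = q then 1 else 0 with hddef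
  have dq1 : d (q + 1) = m - 1 := by simp [hddef]
  have dq : d q = 1 := by simp [hddef]
  have dlt : ∀ i, i < q → d i = 0 := by
    intro i hi
    have h1 : i ≠ q + 1 := by omega
    have h2 : i ≠ q := by omega
    simp [hddef, h1, h2]
  have dgt : ∀ i, q + 2 ≤ i → d i = 0 := by
    intro i hi
    have h1 : i ≠ q + 1 := by omega
    have h2 : i ≠ q := by omega
    simp [hddef, h1, h2]
  clear_value d
  have hmono : Antitone ν := antitone_nat_of_succ_le ha
  have hd : ∀ i, d i + ν (i + 1) ≤ ν i := by
    intro i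
    rcases lt_trichotomy i q with h | h | h
    · rw [dlt i h]
      have := ha i
      omega
    · subst h
      rw [dq]
      omega
    · rcases Nat.lt_or_ge i (q + 2) with h' | h'
      · have : i = q + 1 := by omega
        subst this
        rw [dq1, h0 (q + 1 + 1) le_rfl]
        omega
      · rw [dgt i h', h0 (i + 1) (by omega)]
        omega
  have hdle : ∀ i, d i ≤ ν i := by
    intro i
    have := hd i
    omega
  have dsum : ∀ k, k ≤ q → ∑ i ∈ Finset.range k, d i = 0 := by
    intro k hk
    apply Finset.sum_eq_zero
    intro i hi
    exact dlt i (by have := Finset.mem_range.1 hi; omega)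
  have hsumr : ∑ i ∈ Finset.range (q + 2), d i = m := by
    rw [Finset.sum_range_succ, Finset.sum_range_succ, dsum q le_rfl, dq, dq1]
    omega
  have hps := psum_sub ν d hdle
  apply step b m (q + 2) ν d fl ih hb hm (by omega) h0 hp htot hd hsumr
  · simp only [Nat.add_succ_sub_one, dq1]
    omega
  · intro s hs'
    have p := hps s.length
    beta_reduce
    rcases lt_trichotomy s.length (q + 1) with h | h | h
    · rw [dsum s.length (by omega)] at p
      have h2 := hD s (hs'.trans (List.sublist_append_left _ _))
      omega
    · have h3 : ∑ i ∈ Finset.range s.length, d i = 1 := by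
        rw [h, Finset.sum_range_succ, dsum q le_rfl, dq]
      have h4 : s.length * (c + m) ≤ ∑ i ∈ Finset.range s.length, ν i := by
        have : ∑ i ∈ Finset.range s.length, (c + m) ≤ ∑ i ∈ Finset.range s.length, ν i := by
          apply Finset.sum_le_sum
          intro i hi
          have h5 : ν q ≤ ν i := hmono (by have := Finset.mem_range.1 hi; omega)
          omega
        simpa using this
      have h5 : s.sum ≤ s.length * (c + m - 1) := by
        have := List.sum_le_card_nsmul s (c + m - 1) (by
          intro x hx
          have hx1 : [x].Sublist b := (List.singleton_sublist.2 hx).trans hs'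
          have := hT x m (hx1.append (List.Sublist.refl [m]))
          omega)
        simpa using this
      have h6 : s.length * (c + m) = s.length * (c + m - 1) + s.length := by
        obtain ⟨u, hu⟩ : ∃ u, c + m = u + 1 := ⟨c + m - 1, by omega⟩
        rw [hu]
        simp
        ring
      omega
    · have h3 := psum_const ν (q + 2) s.length h0 (by omega)
      have h4 := psum_const d (q + 2) s.length dgt (by omega)
      have := sum_ge b hb s hs'
      omega
  · have := hdle 0
    rcases Nat.eq_zero_or_pos q with h | h
    · subst h
      rw [dq]
      omega
    · rw [dlt 0 h]
      omega
  · intro _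
    exact ⟨q, by omega, by omega⟩
  · intro _
    refine ⟨by omega, Or.inr ⟨c, hc, ?_, ?_⟩⟩
    · intro x y hxy
      exact hT x y (hxy.trans (List.sublist_append_left _ _))
    · simp only [Nat.add_succ_sub_one, Nat.add_sub_cancel, dq1, dq]
      omega

lemma claim_single (m : ℕ) (hm : 2 ≤ m) : Claim [m] := by
  intro ν r fl hr ha h0 hp htot hD hE hfl
  have h1 := hD [m] (List.Sublist.refl _)
  simp only [List.sum_singleton, List.length_singleton, Finset.sum_range_one] at h1 htot hE
  have hr1 : r = 1 := by
    by_contra hne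
    obtain ⟨q, rfl⟩ : ∃ q, r = q + 2 := ⟨r - 2, by omega⟩
    rw [Finset.sum_range_succ', Finset.sum_range_succ'] at htot
    have := hp (0 + 1) (by omega)
    omega
  subst hr1
  refine ⟨[] ++ blk ν 1, good_append [] m 1 ν ν [] (by omega) (by simp) le_rfl h0 ?_ htot
    (hp 0 (by omega)) ?_ (by simp), ?_⟩
  · intro i
    rw [h0 (i + 1) (by omega)]
    omega
  · refine ⟨⟨by simp, by simp, by simp⟩, ?_, ?_, by simp⟩
    · intro k j
      simp
    · intro j
      simp
  · intro h
    have := (hfl h).1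
    omega

lemma claim_all (b : List ℕ) (hne : b ≠ []) (hb : ∀ x ∈ b, 2 ≤ x) (hT : Tri b) : Claim b := by
  induction b using List.reverseRecOn with
  | nil => exact absurd rfl hne
  | append_singleton b m ihb =>
    have hm : 2 ≤ m := hb m (by simp)
    by_cases hbe : b = []
    · subst hbe
      exact claim_single m hm
    have hb' : ∀ x ∈ b, 2 ≤ x := fun x hx => hb x (by simp [hx])
    have ih := ihb hbe hb' (fun x y z h => hT x y z (h.trans (List.sublist_append_left _ _)))
    intro ν r fl hr ha h0 hp htot hD hE hfl
    simp only [List.sum_append, List.sum_singleton, List.length_append,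
      List.length_singleton] at htot hE
    have hlen : 1 ≤ b.length := List.length_pos_iff.2 hbe
    have hνm : m ≤ ν 0 := by
      have := hD [m] (List.sublist_append_right _ _)
      simpa using this
    have hr2 : 2 ≤ r := by
      by_contra hcon
      have : r = 1 := by omega
      subst this
      simp only [Finset.sum_range_one] at htot
      omega
    have h01 : ν 0 + ν 1 ≤ b.sum + m := by
      obtain ⟨q, rfl⟩ : ∃ q, r = q + 2 := ⟨r - 2, by omega⟩
      rw [Finset.sum_range_succ', Finset.sum_range_succ'] at htot
      have e : ν (0 + 1) = ν 1 := rfl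
      omega
    have h1p : 1 ≤ ν 1 := hp 1 (by omega)
    by_cases hC : fl ∧ ν 0 + m + b.length ≤ b.sum + m + 1 ∧ m ≤ ν (r - 1)
    · obtain ⟨hf, hs, hq⟩ := hC
      obtain ⟨_, hF⟩ := hfl hf
      simp only [List.sum_append, List.sum_singleton, List.length_append,
        List.length_singleton] at hF
      rcases hF with hF | ⟨c, hc, hTc, hcq⟩
      · omega
      · obtain ⟨q, rfl⟩ : ∃ q, r = q + 2 := ⟨r - 2, by omega⟩
        exact step_mod b m q ν fl ih hb' hm ha h0 hp htot hD hs hq c hc hTc hcq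
    · obtain ⟨s, hs⟩ : ∃ s, ν 0 + b.length + s = b.sum + m := ⟨b.sum + m - ν 0 - b.length, by omega⟩
      obtain ⟨t, ht⟩ : ∃ t, t = min m (min (s + 1) (ν 1)) := ⟨_, rfl⟩
      have ha0 : ν 1 ≤ ν 0 := ha 0
      refine step_greedy b m r ν fl ih hb' hm hr2 ha h0 hp htot hD hT t (by omega) (by omega)
        (by omega) (by omega) (by omega) ?_ ?_
      · rcases Nat.lt_or_ge (s + 1) m with h | h
        · rcases Nat.lt_or_ge (ν 1) (s + 1) with h' | h'
          · omega
          · have hts : t = s + 1 := by omega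
            match b, hlen with
            | [x], _ =>
              have := hD [x] (by simp)
              simp at this hs h01
              omega
            | x :: y :: l, _ =>
              have h5 : [x, y].Sublist (x :: y :: l) := by simp
              have h6 := hT x y m (h5.append (List.Sublist.refl [m]))
              have h7 := sum_ge _ hb' _ h5
              simp at h7 hs h01
              simp only [List.sum_cons] at *
              omega
        · omega
      · intro hf
        by_contra hcon
        apply hC
        refine ⟨hf, ?_, ?_⟩ <;> omega

/-! ### Necessity -/

lemma good_peel (b : List ℕ) (m : ℕ) (ν : ℕ → ℕ) (w : List ℕ) (hm : 2 ≤ m)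
    (hb : ∀ x ∈ b, 2 ≤ x) (hw : Good (b ++ [m]) ν w) :
    ∃ (μ : ℕ → ℕ) (w' v : List ℕ), w = w' ++ v ∧ Good b μ w' ∧ v.length = m ∧
      (∀ i, ν i = μ i + v.count (i + 1)) ∧ (∀ i, ν (i + 1) ≤ μ i) ∧
      (b ≠ [] → v.count 1 + 1 ≤ m) := by
  have hl := hw.rib.1
  simp only [List.sum_append, List.sum_singleton] at hl
  obtain ⟨w', v, rfl, hw', hv⟩ : ∃ w' v, w = w' ++ v ∧ w'.length = b.sum ∧ v.length = m :=
    ⟨w.take b.sum, w.drop b.sum, (List.take_append_drop _ _).symm, by simp; omega, by simp; omega⟩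
  obtain ⟨h1, h2, h3⟩ := (ribbon_snoc b m w' v hw' hv (by omega) hb).1 hw.rib
  have hz := hw.zero
  rw [List.count_append] at hz
  have hc : ∀ i, ν i = w'.count (i + 1) + v.count (i + 1) := by
    intro i
    rw [← hw.cnt i, List.count_append]
  refine ⟨fun i => w'.count (i + 1), w', v, rfl, ⟨h1, ?_, fun _ => rfl, by omega⟩, hv, hc, ?_, ?_⟩
  · intro k j
    have := hw.yam (min k w'.length) j
    rw [List.take_append_of_le_length (by omega)] at this
    rwa [List.take_eq_take_min]
  · intro i
    -- split the block at the letters `≥ i + 2`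
    obtain ⟨v1, v2, e, a1, a2⟩ : ∃ v1 v2, v = v1 ++ v2 ∧ (∀ x ∈ v1, i + 2 ≤ x) ∧
        (∀ x ∈ v2, x ≤ i + 1) := by
      clear hw h3 hz hc hv hl
      induction v with
      | nil => exact ⟨[], [], rfl, by simp, by simp⟩
      | cons a v ih =>
        rw [List.pairwise_cons] at h2
        by_cases h : i + 2 ≤ a
        · obtain ⟨v1, v2, e, a1, a2⟩ := ih h2.2
          exact ⟨a :: v1, v2, by simp [e], by simpa [h] using a1, a2⟩
        · refine ⟨[], a :: v, rfl, by simp, ?_⟩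
          intro x hx
          rcases List.mem_cons.1 hx with rfl | hx
          · omega
          · have := h2.1 x hx
            omega
    have hy := hw.yam (w' ++ v1).length i
    rw [e, ← List.append_assoc, List.take_left, List.count_append, List.count_append] at hy
    have z1 : v1.count (i + 1) = 0 := by
      rw [List.count_eq_zero]
      intro h
      have := a1 _ h
      omega
    have z2 : v2.count (i + 2) = 0 := by
      rw [List.count_eq_zero]
      intro h
      have := a2 _ h
      omega
    have h5 := hc (i + 1)
    rw [e, List.count_append] at h5
    have e2 : i + 1 + 1 = i + 2 := rfl
    rw [e2] at h5
    beta_reduce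
    omega
  · intro hne
    have h4 := h3 hne
    have hpos : 0 < w'.length := by
      have := List.length_pos_iff.2 hne
      have := sum_ge b hb [] (by simp)
      simp at this
      omega
    have h5 : 1 ≤ w'.getD (b.sum - 1) 0 := by
      rw [List.getD_eq_getElem _ _ (by omega)]
      by_contra h
      have h6 : w'[b.sum - 1] = 0 := by omega
      have h7 : w'.count 0 = 0 := by omega
      rw [List.count_eq_zero] at h7
      apply h7
      rw [← h6]
      exact List.getElem_mem _
    match v, hv with
    | a :: v, hv =>
      simp only [List.getD_cons_zero] at h4
      have : a ≠ 1 := by omega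
      rw [List.count_cons_of_ne this]
      have := List.count_le_length (a := 1) (l := v)
      simp at hv
      omega

lemma good_first (b : List ℕ) (hne : b ≠ []) (hb : ∀ x ∈ b, 2 ≤ x) :
    ∀ ν w, Good b ν w → ν 0 + b.length ≤ b.sum + 1 := by
  induction b using List.reverseRecOn with
  | nil => exact absurd rfl hne
  | append_singleton b m ih =>
    intro ν w hw
    have hb' : ∀ x ∈ b, 2 ≤ x := fun x hx => hb x (by simp [hx])
    obtain ⟨μ, w', v, rfl, hg, hv, hc, hs, hh⟩ := good_peel b m ν w (hb m (by simp)) hb' hw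
    have h0 := hc 0
    rw [zero_add] at h0
    simp only [List.sum_append, List.sum_singleton, List.length_append, List.length_singleton]
    by_cases hbe : b = []
    · subst hbe
      have h1 := hg.rib.1
      simp at h1
      subst h1
      have h2 := hg.cnt 0
      simp at h2
      have := List.count_le_length (a := 1) (l := v)
      simp
      omega
    · have := ih hbe hb' μ w' hg
      have := hh hbe
      omega

lemma count_total (v : List ℕ) (hz : v.count 0 = 0) (r : ℕ)
    (hr : ∀ i, r ≤ i → v.count (i + 1) = 0) :
    v.length = ∑ i ∈ Finset.range r, v.count (i + 1) := by
  induction v with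
  | nil => simp
  | cons a v ih =>
    have ha : a ≠ 0 := by
      rintro rfl
      simp at hz
    obtain ⟨k, rfl⟩ : ∃ k, a = k + 1 := ⟨a - 1, by omega⟩
    have hk : k < r := by
      by_contra h
      have := hr k (by omega)
      simp at this
    have h1 := ih (by rw [List.count_cons] at hz; omega)
      (by intro i hi; have := hr i hi; rw [List.count_cons] at this; omega)
    simp only [List.count_cons, Finset.sum_add_distrib, ← h1, List.length_cons]
    have : ∑ i ∈ Finset.range r, (if (k + 1 == i + 1) = true then 1 else 0) = 1 := by
      rw [Finset.sum_eq_single k]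
      · simp
      · intro i _ hi
        have : ¬ (k + 1 = i + 1) := by omega
        simp
        omega
      · simp
        omega
    omega

lemma good_dom (b : List ℕ) (hb : ∀ x ∈ b, 2 ≤ x) :
    ∀ ν w, Good b ν w → (∃ r, ∀ i, r ≤ i → ν i = 0) → Dom b ν := by
  induction b using List.reverseRecOn with
  | nil =>
    intro ν w _ _ s hs
    have := List.sublist_nil.1 hs
    simp [this]
  | append_singleton b m ih =>
    intro ν w hw ⟨r, hr⟩ s hs
    have hb' : ∀ x ∈ b, 2 ≤ x := fun x hx => hb x (by simp [hx])
    obtain ⟨μ, w', v, rfl, hg, hv, hc, hst, -⟩ := good_peel b m ν w (hb m (by simp)) hb' hw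
    have hD := ih hb' μ w' hg ⟨r, fun i hi => by have := hc i; have := hr i hi; omega⟩
    have hvz : v.count 0 = 0 := by
      have := hw.zero
      rw [List.count_append] at this
      omega
    obtain ⟨s1, s2, rfl, hs1, hs2⟩ := List.sublist_append_iff.1 hs
    have h1 := hD s1 hs1
    have hP : ∀ k, ∑ i ∈ Finset.range k, ν i =
        ∑ i ∈ Finset.range k, μ i + ∑ i ∈ Finset.range k, v.count (i + 1) := by
      intro k
      rw [← Finset.sum_add_distrib]
      exact Finset.sum_congr rfl (fun i _ => hc i)
    rcases List.sublist_singleton.1 hs2 with rfl | rfl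
    · have := hP s1.length
      simp only [List.append_nil]
      omega
    · simp only [List.sum_append, List.sum_singleton, List.length_append, List.length_singleton]
      have htail : ∀ n k, ∑ i ∈ Finset.range (k + n), v.count (i + 1) ≤
          ∑ i ∈ Finset.range k, v.count (i + 1) + ν k - ν (k + n) := by
        intro n k
        induction n with
        | zero => simp
        | succ n ihn =>
          rw [← add_assoc, Finset.sum_range_succ]
          have h3 := hc (k + n)
          have h4 := hst (k + n)
          have h5 : ν (k + n) ≤ ν k := by
            have : Antitone ν := antitone_nat_of_succ_le
              (fun i => by have := hc i; have := hst i; omega)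
            exact this (by omega)
          omega
      have ht := count_total v hvz (s1.length + r)
        (fun i hi => by have := hc i; have := hr i (by omega); omega)
      have h2 := htail r s1.length
      have h3 := hP s1.length
      rw [Finset.sum_range_succ]
      omega

/-! ### Translation between lists and functions -/

lemma take_sum_eq (l : List ℕ) (i : ℕ) :
    (l.take i).sum = ∑ j ∈ Finset.range i, l.getD j 0 := by
  induction i with
  | zero => simp
  | succ i ih =>
    rw [Finset.sum_range_succ, ← ih]
    rcases Nat.lt_or_ge i l.length with h | h
    · rw [List.sum_take_succ _ _ h, List.getD_eq_getElem _ _ h]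
    · rw [List.getD_eq_default _ _ h, List.take_of_length_le h, List.take_of_length_le (by omega)]
      rfl

lemma sublist_sum_le (l : List ℕ) (hl : l.Pairwise (· ≥ ·)) :
    ∀ s : List ℕ, s.Sublist l → s.sum ≤ (l.take s.length).sum := by
  induction l with
  | nil =>
    intro s hs
    have := List.sublist_nil.1 hs
    simp [this]
  | cons a l ih =>
    intro s hs
    rw [List.pairwise_cons] at hl
    cases s with
    | nil => simp
    | cons x s =>
      have h1 : x ≤ a ∧ s.Sublist l := by
        rcases List.cons_sublist_cons'.1 hs with h | ⟨h, h'⟩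
        · exact ⟨hl.1 x (h.subset (by simp)), (List.sublist_cons_self x s).trans h⟩
        · exact ⟨h.le, h'⟩
      have := ih hl.2 s h1.2
      simp only [List.sum_cons, List.length_cons, List.take_succ_cons]
      omega

lemma tri_of (b : List ℕ) (htri : ∀ i j k, i < b.length → j < b.length → k < b.length →
      i ≠ j → i ≠ k → j ≠ k → b.getD k 0 < b.getD i 0 + b.getD j 0) : Tri b := by
  intro x y z h
  obtain ⟨f, hf⟩ := List.sublist_iff_exists_fin_orderEmbedding_get_eq.1 h
  have e0 := hf ⟨0, by simp⟩
  have e1 := hf ⟨1, by simp⟩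
  have e2 := hf ⟨2, by simp⟩
  have l01 : f ⟨0, by simp⟩ < f ⟨1, by simp⟩ := f.lt_iff_lt.2 (by simp)
  have l12 : f ⟨1, by simp⟩ < f ⟨2, by simp⟩ := f.lt_iff_lt.2 (by simp)
  generalize f ⟨0, by simp⟩ = i at *
  generalize f ⟨1, by simp⟩ = j at *
  generalize f ⟨2, by simp⟩ = k at *
  simp only [List.get_eq_getElem] at e0 e1 e2
  have g0 : b.getD i 0 = x := by rw [List.getD_eq_getElem _ _ i.2, ← e0]; rfl
  have g1 : b.getD j 0 = y := by rw [List.getD_eq_getElem _ _ j.2, ← e1]; rfl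
  have g2 : b.getD k 0 = z := by rw [List.getD_eq_getElem _ _ k.2, ← e2]; rfl
  have m01 : (i : ℕ) < j := l01
  have m12 : (j : ℕ) < k := l12
  have t1 := htri i j k i.2 j.2 k.2 (by omega) (by omega) (by omega)
  have t2 := htri i k j i.2 k.2 j.2 (by omega) (by omega) (by omega)
  have t3 := htri j k i j.2 k.2 i.2 (by omega) (by omega) (by omega)
  omega

/-- Theorem `triangle`(b): let `b` be a composition with parts ≥ 2 and
`ℓ(b) ≥ 3`.  If every 3-element sub-multiset of the parts of `b` satisfies the strict
triangle inequality, then the connected ribbon `R_b` has full Schur support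
`[b⁺, (|b|−ℓ(b)+1, ℓ(b)−1)]`, where `b⁺` is the weakly decreasing rearrangement of `b`. -/
theorem strict_triangle_implies_full_support
    (b : List ℕ) (h2 : PartsGE b 2) (h3 : 3 ≤ b.length)
    (htri : ∀ i j k, i < b.length → j < b.length → k < b.length →
      i ≠ j → i ≠ k → j ≠ k → b.getD k 0 < b.getD i 0 + b.getD j 0) :
    ∀ bp : List ℕ, bp.Perm b → bp.Pairwise (· ≥ ·) →
      SupportSetConn b =
        {nu | IsPartition nu ∧ DomLE bp nu ∧
          DomLE nu [b.sum - (b.length - 1), b.length - 1]} := by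
  intro bp hperm hsort
  have hb : ∀ x ∈ b, 2 ≤ x := h2
  have hne : b ≠ [] := by
    rintro rfl
    simp at h3
  have hbs := sum_ge b hb [] (by simp)
  simp only [List.sum_nil, List.length_nil] at hbs
  ext nu
  simp only [SupportSetConn, Set.mem_ofPred_eq]
  constructor
  · rintro ⟨hp, w, hr, hy, hc⟩
    have hg : Good b (fun j => nu.getD j 0) w := ⟨hr, hy, hc.1, hc.2⟩
    have hz : ∀ i, nu.length ≤ i → nu.getD i 0 = 0 := fun i hi => List.getD_eq_default _ _ hi
    have hD := good_dom b hb _ w hg ⟨nu.length, hz⟩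
    have hF := good_first b hne hb _ w hg
    have hsum : nu.sum = b.sum := by
      have h1 := count_total w hc.2 nu.length (fun i hi => by rw [hc.1 i]; exact hz i hi)
      have h4 := take_sum_eq nu nu.length
      rw [List.take_length] at h4
      rw [← hr.1, h1, h4]
      exact Finset.sum_congr rfl (fun i _ => (hc.1 i).symm)
    refine ⟨hp, ⟨by rw [hperm.sum_eq, hsum], ?_⟩, ⟨by simp; omega, ?_⟩⟩
    · intro i
      obtain ⟨s, hs1, hs2⟩ : (bp.take i).Subperm b :=
        (List.take_sublist i bp).subperm.trans hperm.subperm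
      have h5 := hD s hs2
      rw [hs1.sum_eq] at h5
      refine h5.trans ?_
      rw [take_sum_eq]
      apply Finset.sum_le_sum_of_subset
      intro j hj
      have := hs1.length_eq
      simp only [List.length_take, Finset.mem_range] at *
      omega
    · intro i
      match i with
      | 0 => simp
      | 1 =>
        rw [take_sum_eq]
        simp only [Finset.sum_range_one, List.take_succ_cons, List.take_zero, List.sum_singleton]
        omega
      | i + 2 =>
        have := take_sum_le nu (i + 2)
        simp
        omega
  · rintro ⟨hp, hd1, hd2⟩
    refine ⟨hp, ?_⟩
    have hsum : nu.sum = b.sum := by rw [← hd1.1, hperm.sum_eq]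
    have hr : 1 ≤ nu.length := by
      by_contra h
      have : nu = [] := List.length_eq_zero_iff.1 (by omega)
      subst this
      simp at hsum
      omega
    have htot : ∑ i ∈ Finset.range nu.length, nu.getD i 0 = b.sum := by
      rw [← take_sum_eq, List.take_length, hsum]
    obtain ⟨w, hw, -⟩ := claim_all b hne hb (tri_of b htri) (fun j => nu.getD j 0) nu.length False
      hr
      (by
        intro i
        rcases Nat.lt_or_ge (i + 1) nu.length with h | h
        · exact getD_of_pw nu hp.1 i h
        · rw [List.getD_eq_default _ _ h]
          omega)
      (fun i hi => List.getD_eq_default _ _ hi)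
      (by
        intro i hi
        rw [List.getD_eq_getElem _ _ hi]
        exact hp.2 _ (List.getElem_mem hi))
      htot
      (by
        intro s hs
        obtain ⟨s', hs1, hs2⟩ : s.Subperm bp := hs.subperm.trans hperm.symm.subperm
        have h5 := sublist_sum_le bp hsort s' hs2
        rw [hs1.sum_eq, hs1.length_eq] at h5
        have h6 := hd1.2 s.length
        rw [take_sum_eq nu] at h6
        exact h5.trans h6)
      (by
        have h5 := hd2.2 1
        rw [take_sum_eq] at h5
        simp only [Finset.sum_range_one, List.take_succ_cons, List.take_zero,
          List.sum_singleton] at h5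
        omega)
      (fun h => h.elim)
    exact ⟨w, hw.rib, hw.yam, hw.cnt, hw.zero⟩

end RibbonSupport
end

section
/- Let β = (β_1,β_2,β_3) be a composition of length 3 with all parts at least 2, let m be its largest part and a, b the other two parts. Then the connected ribbon R_β has full Schur support [β^+, (|β|−2, 2)], except exactly when m ≥ a + b and m occurs as the first or the last entry of β; in those exceptional cases the partition ν = (m, a+b) lies in the Schur interval [β^+, (|β|−2, 2)] but not in the Schur support [R_β]. -/
namespace RibbonSupport

theorem pw_iff (A : List ℕ) (x : ℕ) (hA : A.length = x) :
    (∀ j, j + 1 < x → A.getD (j + 1) 0 ≤ A.getD j 0) ↔ A.Pairwise (· ≥ ·) := by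
  subst hA
  rw [← List.isChain_iff_pairwise, List.isChain_iff_getElem]
  constructor
  · intro h i hi
    have := h i hi
    rw [List.getD_eq_getElem _ _ hi, List.getD_eq_getElem _ _ (by omega)] at this
    exact this
  · intro h i hi
    rw [List.getD_eq_getElem _ _ hi, List.getD_eq_getElem _ _ (by omega)]
    exact h i hi

theorem ribbon_iff (A B C : List ℕ) (x y z : ℕ) (hA : A.length = x) (hB : B.length = y)
    (hC : C.length = z) (hx : 0 < x) (hy : 0 < y) (hz : 0 < z) :
    IsRibbonWord [x, y, z] (fun _ => true) (A ++ (B ++ C)) ↔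
      A.Pairwise (· ≥ ·) ∧ B.Pairwise (· ≥ ·) ∧ C.Pairwise (· ≥ ·) ∧
      A.getD (x - 1) 0 < B.getD 0 0 ∧ B.getD (y - 1) 0 < C.getD 0 0 := by
  have gA : ∀ j, j < x → (A ++ (B ++ C)).getD j 0 = A.getD j 0 := by
    intro j hj
    rw [List.getD_append _ _ _ _ (by omega)]
  have gB : ∀ j, j < y → (A ++ (B ++ C)).getD (x + j) 0 = B.getD j 0 := by
    intro j hj
    rw [List.getD_append_right _ _ _ _ (by omega), List.getD_append _ _ _ _ (by omega)]
    congr 1; omega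
  have gC : ∀ j, j < z → (A ++ (B ++ C)).getD (x + y + j) 0 = C.getD j 0 := by
    intro j hj
    rw [List.getD_append_right _ _ _ _ (by omega), List.getD_append_right _ _ _ _ (by omega)]
    congr 1; omega
  rw [← pw_iff A x hA, ← pw_iff B y hB, ← pw_iff C z hC]
  unfold IsRibbonWord
  constructor
  · rintro ⟨-, h1, h2⟩
    refine ⟨?_, ?_, ?_, ?_, ?_⟩
    · intro j hj
      have := h1 0 j (by simp) (by simpa using hj)
      simp only [rowOffset, List.take_zero, List.sum_nil, zero_add] at this
      rwa [gA _ hj, gA _ (by omega)] at this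
    · intro j hj
      have := h1 1 j (by simp) (by simpa using hj)
      simp only [rowOffset, List.take_succ_cons, List.take_zero, List.sum_cons, List.sum_nil,
        add_zero] at this
      rwa [add_assoc, gB _ hj, gB _ (by omega)] at this
    · intro j hj
      have := h1 2 j (by simp) (by simpa using hj)
      simp only [rowOffset, List.take_succ_cons, List.take_zero, List.sum_cons, List.sum_nil,
        add_zero] at this
      rwa [add_assoc (x + y), gC _ hj, gC _ (by omega)] at this
    · have := h2 0 (by simp) rfl
      simp only [rowOffset, List.take_succ_cons, List.take_zero, List.sum_cons, List.sum_nil,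
        add_zero, zero_add] at this
      rw [gA _ (by omega)] at this
      have h := gB 0 hy
      rw [add_zero] at h
      rwa [h] at this
    · have := h2 1 (by simp) rfl
      simp only [rowOffset, List.take_succ_cons, List.take_zero, List.sum_cons, List.sum_nil,
        add_zero] at this
      have h := gC 0 hz
      rw [add_zero] at h
      rwa [h, show x + y - 1 = x + (y - 1) by omega, gB _ (by omega)] at this
  · rintro ⟨a1, a2, a3, a4, a5⟩
    refine ⟨by simp [hA, hB, hC], ?_, ?_⟩
    · intro i j hi hj
      simp only [List.length_cons, List.length_nil] at hi
      have : i = 0 ∨ i = 1 ∨ i = 2 := by omega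
      rcases this with rfl | rfl | rfl
      · simp only [List.getD_cons_zero] at hj
        simp only [rowOffset, List.take_zero, List.sum_nil, zero_add]
        rw [gA _ hj, gA _ (by omega)]
        exact a1 j hj
      · simp only [List.getD_cons_zero, List.getD_cons_succ] at hj
        simp only [rowOffset, List.take_succ_cons, List.take_zero, List.sum_cons, List.sum_nil,
          add_zero]
        rw [add_assoc, gB _ hj, gB _ (by omega)]
        exact a2 j hj
      · simp only [List.getD_cons_zero, List.getD_cons_succ] at hj
        simp only [rowOffset, List.take_succ_cons, List.take_zero, List.sum_cons, List.sum_nil,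
          add_zero]
        rw [add_assoc (x + y), gC _ hj, gC _ (by omega)]
        exact a3 j hj
    · intro i hi _
      simp only [List.length_cons, List.length_nil] at hi
      have : i = 0 ∨ i = 1 := by omega
      rcases this with rfl | rfl
      · simp only [rowOffset, List.take_succ_cons, List.take_zero, List.sum_cons, List.sum_nil,
          add_zero, zero_add]
        have h := gB 0 hy
        rw [add_zero] at h
        rwa [gA _ (by omega), h]
      · simp only [rowOffset, List.take_succ_cons, List.take_zero, List.sum_cons, List.sum_nil,
          add_zero]
        have h := gC 0 hz
        rw [add_zero] at h
        rwa [h, show x + y - 1 = x + (y - 1) by omega, gB _ (by omega)]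

theorem dec_struct (L : List ℕ) (h : L.Pairwise (· ≥ ·)) (hb : ∀ a ∈ L, 1 ≤ a ∧ a ≤ 3) :
    ∃ t u v, L = List.replicate t 3 ++ (List.replicate u 2 ++ List.replicate v 1) := by
  induction L with
  | nil => exact ⟨0, 0, 0, rfl⟩
  | cons a L ih =>
    rw [List.pairwise_cons] at h
    obtain ⟨t, u, v, e⟩ := ih h.2 (fun c hc => hb c (List.mem_cons_of_mem _ hc))
    have ha := hb a List.mem_cons_self
    have : a = 1 ∨ a = 2 ∨ a = 3 := by omega
    have h3 : t ≠ 0 → 3 ≤ a := fun ht => h.1 3 (by rw [e]; simp [ht])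
    have h2 : u ≠ 0 → 2 ≤ a := fun ht => h.1 2 (by rw [e]; simp [ht])
    rcases this with rfl | rfl | rfl
    · have : t = 0 := by by_contra hh; have := h3 hh; omega
      have : u = 0 := by by_contra hh; have := h2 hh; omega
      subst t u
      exact ⟨0, 0, v + 1, by simp [e, List.replicate_succ]⟩
    · have : t = 0 := by by_contra hh; have := h3 hh; omega
      subst t
      exact ⟨0, u + 1, v, by simp [e, List.replicate_succ]⟩
    · exact ⟨t + 1, u, v, by simp [e, List.replicate_succ]⟩

theorem yam_prefix {w : List ℕ} (h : IsYam w) (p : List ℕ) (q : List ℕ) (e : w = p ++ q) (j : ℕ) :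
    p.count (j + 2) ≤ p.count (j + 1) := by
  have := h p.length j
  rwa [e, List.take_left'] at this
  rfl

/-- After a prefix with letters at most `k`, a weakly decreasing row has letters at most `k+1`. -/
theorem row_bound {w : List ℕ} (h : IsYam w) (P L Q : List ℕ) (e : w = P ++ (L ++ Q)) (k : ℕ)
    (hP : ∀ a ∈ P, a ≤ k) (hL : L.Pairwise (· ≥ ·)) : ∀ a ∈ L, a ≤ k + 1 := by
  cases L with
  | nil => simp
  | cons c L =>
    have hc : c ≤ k + 1 := by
      by_contra hh
      obtain ⟨j, rfl⟩ : ∃ j, c = j + 2 := ⟨c - 2, by omega⟩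
      have := yam_prefix h (P ++ [j + 2]) (L ++ Q) (by simp [e]) j
      have h0 : P.count (j + 1) = 0 := List.count_eq_zero.2 (fun hm => by have := hP _ hm; omega)
      simp [h0] at this
    rw [List.pairwise_cons] at hL
    intro a ha
    rcases List.mem_cons.1 ha with rfl | ha
    · exact hc
    · have := hL.1 a ha
      omega

/-- Arithmetic form of membership. -/
def Arith (x y z n1 n2 n3 : ℕ) : Prop :=
  ∃ s u v, 1 ≤ s ∧ s ≤ x ∧ s ≤ y ∧ n3 ≤ s ∧ 1 ≤ n3 + u ∧ (s = y → 1 ≤ n3) ∧ n3 + u + v = z ∧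
    s + (s + u) ≤ x + y ∧ n1 + s = x + y + v ∧ n2 = s + u

theorem fwd (x y z : ℕ) (hx : 0 < x) (hy : 0 < y) (hz : 0 < z) (nu : List ℕ)
    (h : InSupportConn [x, y, z] nu) :
    Arith x y z (nu.getD 0 0) (nu.getD 1 0) (nu.getD 2 0) ∧ nu.getD 3 0 = 0 := by
  obtain ⟨w, hr, hyam, hc, hc0⟩ := h
  have hl := hr.1
  simp only [List.sum_cons, List.sum_nil, add_zero] at hl
  obtain ⟨A, B, C, rfl, hA, hB, hC⟩ : ∃ A B C : List ℕ, w = A ++ (B ++ C) ∧ A.length = x ∧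
      B.length = y ∧ C.length = z := by
    refine ⟨w.take x, (w.drop x).take y, (w.drop x).drop y, by simp, ?_, ?_, ?_⟩ <;> simp <;> omega
  rw [ribbon_iff A B C x y z hA hB hC hx hy hz] at hr
  obtain ⟨pA, pB, pC, lAB, lBC⟩ := hr
  have hpos : ∀ a ∈ A ++ (B ++ C), 1 ≤ a := by
    intro a ha
    by_contra hh
    have : a = 0 := by omega
    subst this
    exact List.count_eq_zero.1 hc0 ha
  have bA := row_bound hyam [] A (B ++ C) (by simp) 0 (by simp) pA
  have bB := row_bound hyam A B C (by simp) 1 bA pB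
  have bC := row_bound hyam (A ++ B) C [] (by simp) 2 (by
    intro a ha
    rcases List.mem_append.1 ha with h | h
    · have := bA a h; omega
    · exact bB a h) pC
  obtain ⟨t1, u1, v1, eA⟩ := dec_struct A pA (fun a ha => ⟨hpos a (by simp [ha]), by
    have := bA a ha; omega⟩)
  obtain ⟨t2, s, v2, eB⟩ := dec_struct B pB (fun a ha => ⟨hpos a (by simp [ha]), by
    have := bB a ha; omega⟩)
  obtain ⟨t, u, v, eC⟩ := dec_struct C pC (fun a ha => ⟨hpos a (by simp [ha]), by
    have := bC a ha; omega⟩)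
  have : t1 = 0 := by
    by_contra hh; have := bA 3 (by simp [eA, hh]); omega
  have : u1 = 0 := by
    by_contra hh; have := bA 2 (by simp [eA, hh]); omega
  have : t2 = 0 := by
    by_contra hh; have := bB 3 (by simp [eB, hh]); omega
  subst t1 u1 t2
  simp only [List.replicate_zero, List.nil_append] at eA eB
  have lA : v1 = x := by rw [← hA, eA]; simp
  have lB : s + v2 = y := by rw [← hB, eB]; simp
  have lC : t + (u + v) = z := by rw [← hC, eC]; simp
  subst v1
  have y1 := yam_prefix hyam (A ++ List.replicate s 2) (List.replicate v2 1 ++ C)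
    (by simp [eB]) 0
  have y2 := yam_prefix hyam (A ++ (B ++ List.replicate t 3))
    (List.replicate u 2 ++ List.replicate v 1) (by simp [eC]) 1
  have y3 := yam_prefix hyam (A ++ (B ++ (List.replicate t 3 ++ List.replicate u 2)))
    (List.replicate v 1) (by simp [eC]) 0
  simp [eA, eB, List.count_replicate] at y1 y2 y3
  have c0 := hc 0
  have c1 := hc 1
  have c2 := hc 2
  have c3 := hc 3
  simp [eA, eB, eC, List.count_replicate] at c0 c1 c2 c3
  have hs : 1 ≤ s := by
    by_contra hh
    have : s = 0 := by omega
    subst this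
    have e1 : A.getD (x - 1) 0 = 1 := by
      rw [eA, List.getD_replicate _ (by omega)]
    have e2 : B.getD 0 0 = 1 := by
      rw [eB]; simp only [List.replicate_zero, List.nil_append]
      rw [List.getD_replicate _ (by omega)]
    omega
  have htu : 1 ≤ t + u := by
    by_contra hh
    have h1 : t = 0 := by omega
    have h2 : u = 0 := by omega
    subst h1 h2
    have e2 : C.getD 0 0 = 1 := by
      rw [eC]; simp only [List.replicate_zero, List.nil_append]
      rw [List.getD_replicate _ (by omega)]
    have e1 : 1 ≤ B.getD (y - 1) 0 := by
      rw [List.getD_eq_getElem _ _ (by omega)]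
      apply hpos
      simp
    omega
  have hsy : s = y → 1 ≤ t := by
    intro hsy
    by_contra hh
    have h1 : t = 0 := by omega
    have h2 : v2 = 0 := by omega
    subst h1 h2
    have e1 : B.getD (y - 1) 0 = 2 := by
      rw [eB]; simp only [List.replicate_zero, List.append_nil]
      rw [List.getD_replicate _ (by omega)]
    have e2 : C.getD 0 0 = 2 := by
      rw [eC]; simp only [List.replicate_zero, List.nil_append]
      rw [List.getD_append _ _ _ _ (by simp; omega), List.getD_replicate _ (by omega)]
    omega
  simp only [List.getD_eq_getElem?_getD]
  refine ⟨⟨s, u, v, ?_⟩, by omega⟩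
  omega

theorem bwd (x y z : ℕ) (hx : 0 < x) (hy : 0 < y) (hz : 0 < z) (nu : List ℕ)
    (h : Arith x y z (nu.getD 0 0) (nu.getD 1 0) (nu.getD 2 0)) (h3 : nu.length ≤ 3) :
    InSupportConn [x, y, z] nu := by
  obtain ⟨s, u, v, h⟩ := h
  generalize ht : nu.getD 2 0 = t at h
  refine ⟨List.replicate x 1 ++ ((List.replicate s 2 ++ List.replicate (y - s) 1) ++
    (List.replicate t 3 ++ (List.replicate u 2 ++ List.replicate v 1))), ?_, ?_, ?_, ?_⟩
  · rw [ribbon_iff _ _ _ x y z (by simp) (by simp; omega) (by simp; omega) hx hy hz]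
    refine ⟨?_, ?_, ?_, ?_, ?_⟩
    · simp [List.pairwise_replicate]
    · simp [List.pairwise_append, List.pairwise_replicate]
      try grind
    · simp [List.pairwise_append, List.pairwise_replicate]
      try grind
    · rw [List.getD_replicate _ (by omega), List.getD_append _ _ _ _ (by simp; omega),
        List.getD_replicate _ (by omega)]
      omega
    · by_cases hsy : s = y
      · rw [List.getD_append _ _ _ _ (by simp; omega), List.getD_replicate _ (by omega),
          List.getD_append _ _ _ _ (by simp; omega), List.getD_replicate _ (by omega)]
        omega
      · rw [List.getD_append_right _ _ _ _ (by simp; omega),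
          List.getD_replicate _ (by simp; omega)]
        by_cases ht : t = 0
        · subst ht
          simp only [List.replicate_zero, List.nil_append]
          rw [List.getD_append _ _ _ _ (by simp; omega), List.getD_replicate _ (by omega)]
          omega
        · rw [List.getD_append _ _ _ _ (by simp; omega), List.getD_replicate _ (by omega)]
          omega
  · intro k j
    simp only [List.take_append, List.take_replicate, List.count_append, List.count_replicate,
      List.length_replicate, List.length_append]
    rcases j with _ | _ | j
    · simp; omega
    · simp; omega
    · simp
  · intro j
    simp only [List.count_append, List.count_replicate]
    rcases j with _ | _ | _ | j
    · simp at h ⊢; omega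
    · simp at h ⊢; omega
    · simp at h ht ⊢; omega
    · have : nu.getD (j + 1 + 1 + 1) 0 = 0 := List.getD_eq_default _ _ (by omega)
      rw [this]; simp
  · simp [List.count_append, List.count_replicate]

/-- Arithmetic form of the interval for a sorted list of length three. -/
theorem interval_iff (p q r : ℕ) (hpq : q ≤ p) (hqr : r ≤ q) (hr : 2 ≤ r) (nu : List ℕ)
    (hnu : IsPartition nu) :
    (DomLE [p, q, r] nu ∧ DomLE nu [p + q + r - 2, 2]) ↔
    nu.length ≤ 3 ∧ nu.getD 0 0 + nu.getD 1 0 + nu.getD 2 0 = p + q + r ∧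
      p ≤ nu.getD 0 0 ∧ nu.getD 2 0 ≤ r ∧ 2 ≤ nu.getD 1 0 + nu.getD 2 0 := by
  obtain ⟨-, hpos⟩ := hnu
  constructor
  · rintro ⟨⟨e, h⟩, ⟨e', h'⟩⟩
    have a1 := h 1
    have a2 := h 2
    have a3 := h 3
    have b1 := h' 1
    rcases nu with _ | ⟨n1, _ | ⟨n2, _ | ⟨n3, _ | ⟨n4, l⟩⟩⟩⟩
    · simp at e; omega
    · simp at *; omega
    · simp at *; omega
    · simp at *; omega
    · have := hpos n4 (by simp)
      simp at *; omega
  · rintro ⟨hl, hs, h1, h2, h3⟩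
    rcases nu with _ | ⟨n1, _ | ⟨n2, _ | ⟨n3, _ | ⟨n4, l⟩⟩⟩⟩
    · exfalso; simp at hs; omega
    · exfalso; simp at h3
    · simp at *
      refine ⟨⟨by simp; omega, ?_⟩, ⟨by simp; omega, ?_⟩⟩ <;>
      · rintro (_ | _ | _ | i) <;> simp <;> omega
    · simp at *
      refine ⟨⟨by simp; omega, ?_⟩, ⟨by simp; omega, ?_⟩⟩ <;>
      · rintro (_ | _ | _ | i) <;> simp <;> omega
    · simp at hl; omega

theorem part_antitone (nu : List ℕ) (h : IsPartition nu) :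
    nu.getD 1 0 ≤ nu.getD 0 0 ∧ nu.getD 2 0 ≤ nu.getD 1 0 := by
  have := (pw_iff nu _ rfl).2 h.1
  constructor
  · by_cases h : 1 < nu.length
    · exact this 0 h
    · rw [List.getD_eq_default _ _ (by omega)]; omega
  · by_cases h : 2 < nu.length
    · exact this 1 h
    · rw [List.getD_eq_default _ _ (by omega)]; omega

theorem part_len (nu : List ℕ) (h : IsPartition nu) (h3 : nu.getD 3 0 = 0) : nu.length ≤ 3 := by
  by_contra hh
  rw [List.getD_eq_getElem _ _ (by omega)] at h3
  have := h.2 _ (List.getElem_mem (l := nu) (n := 3) (by omega))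
  omega

theorem sorted_info (x y z : ℕ) (bp : List ℕ) (hp : bp.Perm [x, y, z])
    (hs : bp.Pairwise (· ≥ ·)) : ∃ p q r, bp = [p, q, r] ∧ q ≤ p ∧ r ≤ q ∧
      p + q + r = x + y + z ∧ p = max (max x y) z ∧ r = min (min x y) z := by
  have hl := hp.length_eq
  have hsum := hp.sum_eq
  rcases bp with _ | ⟨p, _ | ⟨q, _ | ⟨r, _ | ⟨n4, l⟩⟩⟩⟩ <;> simp at hl
  have m1 : p ∈ [x, y, z] := hp.subset (by simp)
  have m3 : r ∈ [x, y, z] := hp.subset (by simp)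
  have k1 : x ∈ [p, q, r] := hp.symm.subset (by simp)
  have k2 : y ∈ [p, q, r] := hp.symm.subset (by simp)
  have k3 : z ∈ [p, q, r] := hp.symm.subset (by simp)
  simp at m1 m3 k1 k2 k3 hs hsum
  exact ⟨p, q, r, rfl, by omega, by omega, by omega, by omega, by omega⟩

theorem arith_fwd (x y z n1 n2 n3 : ℕ) (h : Arith x y z n1 n2 n3) :
    n1 + n2 + n3 = x + y + z ∧ max (max x y) z ≤ n1 ∧ n3 ≤ min (min x y) z ∧ 2 ≤ n2 + n3 := by
  obtain ⟨s, u, v, h⟩ := h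
  omega

theorem arith_bwd (x y z n1 n2 n3 : ℕ) (hx : 2 ≤ x) (hy : 2 ≤ y) (hz : 2 ≤ z)
    (hne : ¬ (x + y + z ≤ 2 * max (max x y) z ∧ (x = max (max x y) z ∨ z = max (max x y) z)))
    (h12 : n2 ≤ n1) (h23 : n3 ≤ n2)
    (hs : n1 + n2 + n3 = x + y + z) (h1 : max (max x y) z ≤ n1) (h3 : n3 ≤ min (min x y) z)
    (h2 : 2 ≤ n2 + n3) : Arith x y z n1 n2 n3 := by
  obtain ⟨s, hsdef⟩ : ∃ s, s = max (max 1 n3) (n2 + n3 - z) := ⟨_, rfl⟩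
  have : s ≤ n2 := by omega
  refine ⟨s, n2 - s, z - n3 - (n2 - s), ?_⟩
  refine ⟨by omega, by omega, by omega, by omega, by omega, by omega, by omega, by omega,
    by omega, by omega⟩

/-- Corollary `cor:length3`: let `b = (b₁,b₂,b₃)` be a composition of
length 3 with parts ≥ 2, `m` its largest part.  Then the connected ribbon `R_b` has full
Schur support `[b⁺, (|b|−2, 2)]` except exactly when `m ≥ (sum of the other two parts)` and
`m` occurs as the first or the last entry of `b`; and in those exceptional cases the
partition `(m, |b|−m)` lies in the Schur interval but not in the Schur support of `R_b`. -/
theorem length_three_full_support_classification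
    (b : List ℕ) (hlen : b.length = 3) (h2 : PartsGE b 2)
    (m : ℕ) (hm : m = max (max (b.getD 0 0) (b.getD 1 0)) (b.getD 2 0)) :
    ((∀ bp : List ℕ, bp.Perm b → bp.Pairwise (· ≥ ·) →
        SupportSetConn b =
          {nu | IsPartition nu ∧ DomLE bp nu ∧ DomLE nu [b.sum - 2, 2]}) ↔
      ¬ (b.sum ≤ 2 * m ∧ (b.getD 0 0 = m ∨ b.getD 2 0 = m))) ∧
    ((b.sum ≤ 2 * m ∧ (b.getD 0 0 = m ∨ b.getD 2 0 = m)) →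
      (∀ bp : List ℕ, bp.Perm b → bp.Pairwise (· ≥ ·) →
        DomLE bp [m, b.sum - m] ∧ DomLE [m, b.sum - m] [b.sum - 2, 2]) ∧
      ¬ InSupportConn b [m, b.sum - m]) := by
  obtain ⟨x, y, z, rfl⟩ : ∃ x y z, b = [x, y, z] := by
    rcases b with _ | ⟨x, _ | ⟨y, _ | ⟨z, _ | ⟨n4, l⟩⟩⟩⟩ <;> simp at hlen
    exact ⟨x, y, z, rfl⟩
  have hx : 2 ≤ x := h2 x (by simp)
  have hy : 2 ≤ y := h2 y (by simp)
  have hz : 2 ≤ z := h2 z (by simp)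
  have hsum : [x, y, z].sum = x + y + z := by simp; omega
  rw [hsum]
  simp only [List.getD_cons_zero, List.getD_cons_succ] at hm ⊢
  have second : (x + y + z ≤ 2 * m ∧ (x = m ∨ z = m)) →
      (∀ bp : List ℕ, bp.Perm [x, y, z] → bp.Pairwise (· ≥ ·) →
        DomLE bp [m, x + y + z - m] ∧ DomLE [m, x + y + z - m] [x + y + z - 2, 2]) ∧
      ¬ InSupportConn [x, y, z] [m, x + y + z - m] := by
    intro hex
    constructor
    · intro bp hp hs
      obtain ⟨p, q, r, rfl, hpq, hqr, hpqr, hpm, hrm⟩ := sorted_info x y z bp hp hs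
      rw [← hpqr]
      refine (interval_iff p q r hpq hqr (by omega) _ ?_).2 ?_
      · constructor
        · simp; omega
        · simp; omega
      · simp; omega
    · intro h
      obtain ⟨⟨s, u, v, h⟩, -⟩ := fwd x y z (by omega) (by omega) (by omega) _ h
      simp at h
      omega
  refine ⟨⟨?_, ?_⟩, second⟩
  · intro hall hex
    obtain ⟨hin, hnot⟩ := second hex
    have hperm : ([x, y, z].insertionSort (· ≥ ·)).Perm [x, y, z] := List.perm_insertionSort _ _
    have hsort : ([x, y, z].insertionSort (· ≥ ·)).Pairwise (· ≥ ·) :=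
      List.pairwise_insertionSort _ _
    have he := hall _ hperm hsort
    have hmem : [m, x + y + z - m] ∈ SupportSetConn [x, y, z] := by
      rw [he]
      refine ⟨⟨by simp; omega, by simp; omega⟩, hin _ hperm hsort⟩
    exact hnot hmem.2
  · intro hne bp hp hs
    obtain ⟨p, q, r, rfl, hpq, hqr, hpqr, hpm, hrm⟩ := sorted_info x y z bp hp hs
    ext nu
    simp only [SupportSetConn, Set.mem_ofPred_eq]
    refine and_congr_right fun hnu => ?_
    rw [← hpqr, interval_iff p q r hpq hqr (by omega) nu hnu]
    constructor
    · intro h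
      obtain ⟨ha, h3⟩ := fwd x y z (by omega) (by omega) (by omega) _ h
      have := arith_fwd _ _ _ _ _ _ ha
      refine ⟨part_len nu hnu h3, ?_⟩
      omega
    · rintro ⟨hl, e, a1, a2, a3⟩
      have hanti := part_antitone nu hnu
      subst hm
      exact bwd x y z (by omega) (by omega) (by omega) nu
        (arith_bwd x y z _ _ _ hx hy hz hne hanti.1 hanti.2 (by omega) (by omega) (by omega)
          (by omega)) hl


end RibbonSupport
end

section
/- Let α be a partition with all parts at least 2, let π be a permutation of {1,…,ℓ(α)} and α_π the corresponding rearrangement of α, let R_{α_π} be the connected ribbon with row lengths α_π and overlapping partition p^π, and let ν ∈ [α, (|α|−ℓ(α)+1, ℓ(α)−1)] be a partition. If c_{R_{α_π}}^ν > 0, i.e. there exists an LR tableau of shape R_{α_π} and content ν, then ν_i ≤ Σ_{q=i}^{ℓ(α)} α_q − p^π_i for all 1 ≤ i ≤ ℓ(p^π). -/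
namespace RibbonSupport

lemma sorted_split (c : ℕ) (u : List ℕ) (hu : u.Pairwise (· ≥ ·)) :
    ∃ k, (u.take k).count c = 0 ∧ (u.take k).count (c + 1) = u.count (c + 1) := by
  induction u with
  | nil => exact ⟨0, by simp⟩
  | cons x xs ih =>
    rw [List.pairwise_cons] at hu
    obtain ⟨k, h1, h2⟩ := ih hu.2
    by_cases hx : c < x
    · refine ⟨k + 1, ?_, ?_⟩
      · have : x ≠ c := by omega
        simp [List.count_cons, h1, this]
      · simp [List.count_cons, h2]
    · refine ⟨0, by simp, ?_⟩
      simp only [List.take_zero, List.count_nil]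
      symm
      rw [List.count_eq_zero]
      intro hm
      rcases List.mem_cons.1 hm with h | h
      · omega
      · have := hu.1 _ h
        omega

lemma two_ends (u : List ℕ) (hu : 2 ≤ u.length) : ∃ x m y, u = x :: (m ++ [y]) := by
  match u, hu with
  | x :: v, h =>
    rcases List.eq_nil_or_concat v with rfl | ⟨m, y, rfl⟩
    · simp at h
    · exact ⟨x, m, y, by simp⟩

lemma rowOffset_succ (g : List ℕ) (t : ℕ) (ht : t < g.length) :
    rowOffset g (t + 1) = rowOffset g t + g.getD t 0 := by
  unfold rowOffset
  rw [List.sum_take_succ _ _ ht]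
  simp [List.getD_eq_getElem?_getD, ht]

lemma rowOffset_le (g : List ℕ) (t : ℕ) : rowOffset g t ≤ g.sum := by
  unfold rowOffset
  conv_rhs => rw [← List.take_append_drop t g, List.sum_append]
  omega

lemma row_data (g w : List ℕ) (ov : ℕ → Bool) (hg : ∀ x ∈ g, 2 ≤ x) (hw : IsRibbonWord g ov w)
    (t : ℕ) (ht : t < g.length) :
    ∃ x m y, w.take (rowOffset g (t + 1)) = w.take (rowOffset g t) ++ x :: (m ++ [y]) ∧
      m.length + 2 = g.getD t 0 ∧ w.getD (rowOffset g t) 0 = x ∧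
      w.getD (rowOffset g (t + 1) - 1) 0 = y ∧ (x :: (m ++ [y])).Pairwise (· ≥ ·) := by
  obtain ⟨hl, hrow, -⟩ := hw
  have hs := rowOffset_succ g t ht
  have hle := rowOffset_le g (t + 1)
  have hgt : 2 ≤ g.getD t 0 := by
    have : g.getD t 0 = g[t] := by simp [List.getD_eq_getElem?_getD, ht]
    rw [this]; exact hg _ (List.getElem_mem ht)
  set n := g.getD t 0 with hn
  set o := rowOffset g t with ho
  have hul : ((w.drop o).take n).length = n := by
    simp; omega
  have hget : ∀ j < n, ((w.drop o).take n).getD j 0 = w.getD (o + j) 0 := by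
    intro j hj
    simp [List.getD_eq_getElem?_getD, List.getElem?_take, hj]
  have hpw : ((w.drop o).take n).Pairwise (· ≥ ·) := by
    rw [← List.isChain_iff_pairwise, List.isChain_iff_getElem]
    intro j hj
    have h1 := hget j (by omega)
    have h2 := hget (j + 1) (by omega)
    have h3 := hrow t j ht (by omega)
    rw [← ho, add_assoc, ← h2, ← h1] at h3
    rw [List.getD_eq_getElem _ _ (by omega), List.getD_eq_getElem _ _ (by omega)] at h3
    exact h3
  obtain ⟨x, m, y, hu⟩ := two_ends _ (hul.symm ▸ hgt)
  refine ⟨x, m, y, ?_, ?_, ?_, ?_, ?_⟩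
  · rw [hs, ← hu, List.take_add]
  · rw [hu] at hul; simpa using hul
  · have := hget 0 (by omega)
    rw [hu] at this; simpa using this.symm
  · have h := hget (n - 1) (by omega)
    have h4 : m.length + 2 = n := by rw [hu] at hul; simpa using hul
    rw [hu] at h
    have e : n - 1 = m.length + 1 := by omega
    rw [hs, show o + n - 1 = o + (n - 1) by omega, ← h, e]
    simp [List.getD_eq_getElem?_getD]
  · rw [← hu]; exact hpw

lemma key (g w : List ℕ) (hg : ∀ x ∈ g, 2 ≤ x) (hw : IsRibbonWord g (fun _ => true) w)
    (hy : IsYam w) (s : ℕ → Prop) [DecidablePred s] (t : ℕ) : t ≤ g.length →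
    ((w.take (rowOffset g t)).count (((Finset.range t).filter (fun j => ¬ s j)).card + 1)
      + ((Finset.range (t - 1)).filter (fun j => s j ∧ s (j + 1))).card
      ≤ ∑ j ∈ (Finset.range t).filter s, g.getD j 0) ∧
    (0 < t → s (t - 1) →
      w.getD (rowOffset g t - 1) 0 ≠ ((Finset.range t).filter (fun j => ¬ s j)).card + 1 →
      (w.take (rowOffset g t)).count (((Finset.range t).filter (fun j => ¬ s j)).card + 1)
      + ((Finset.range (t - 1)).filter (fun j => s j ∧ s (j + 1))).card + 1
      ≤ ∑ j ∈ (Finset.range t).filter s, g.getD j 0) := by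
  induction t with
  | zero => intro _; simp [rowOffset]
  | succ t ih =>
    intro ht
    have ht' : t < g.length := by omega
    obtain ⟨ih1, ih2⟩ := ih (by omega)
    obtain ⟨x, m, y, htake, hm, hx, hyy, hpw⟩ := row_data g w _ hg hw t ht'
    have hP : ((Finset.range (t + 1 - 1)).filter (fun j => s j ∧ s (j + 1))).card =
        ((Finset.range (t - 1)).filter (fun j => s j ∧ s (j + 1))).card +
          (if 0 < t ∧ s (t - 1) ∧ s t then 1 else 0) := by
      rcases t with _ | t
      · simp
      · simp only [Nat.add_sub_cancel]
        rw [Finset.range_add_one, Finset.filter_insert]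
        by_cases h : s t ∧ s (t + 1)
        · simp [h]
        · simp [h]
    rw [hP]
    by_cases hst : s t
    · have hC : (Finset.range (t + 1)).filter (fun j => ¬ s j) =
          (Finset.range t).filter (fun j => ¬ s j) := by
        rw [Finset.range_add_one, Finset.filter_insert]; simp [hst]
      have hS : ∑ j ∈ (Finset.range (t + 1)).filter s, g.getD j 0 =
          ∑ j ∈ (Finset.range t).filter s, g.getD j 0 + g.getD t 0 := by
        rw [Finset.range_add_one, Finset.filter_insert, if_pos hst, Finset.sum_insert (by simp),
          add_comm]
      rw [hC, hS]
      set c := ((Finset.range t).filter (fun j => ¬ s j)).card + 1 with hc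
      have hcnt : (w.take (rowOffset g (t + 1))).count c = (w.take (rowOffset g t)).count c +
          m.count c + (if x = c then 1 else 0) + (if y = c then 1 else 0) := by
        rw [htake]
        simp [List.count_cons, List.count_append]; ring
      have hml : m.count c ≤ m.length := List.count_le_length
      have hcol : 0 < t → w.getD (rowOffset g t - 1) 0 < x := by
        intro h0
        have := hw.2.2 (t - 1) (by omega) rfl
        rw [Nat.sub_add_cancel h0, hx] at this
        exact this
      rw [hcnt, hyy]
      by_cases hprev : 0 < t ∧ s (t - 1)
      · have hcol := hcol hprev.1
        have ih2 := ih2 hprev.1 hprev.2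
        rw [if_pos (⟨hprev.1, hprev.2, hst⟩ : 0 < t ∧ s (t - 1) ∧ s t)]
        by_cases hl : w.getD (rowOffset g t - 1) 0 = c
        · rw [if_neg (show ¬ x = c by omega)]
          constructor
          · split_ifs <;> omega
          · intro _ _ hne; rw [if_neg hne]; omega
        · have ih2 := ih2 hl
          constructor
          · split_ifs <;> omega
          · intro _ _ hne; rw [if_neg hne]; split_ifs <;> omega
      · rw [if_neg (show ¬ (0 < t ∧ s (t - 1) ∧ s t) from fun h => hprev ⟨h.1, h.2.1⟩)]
        constructor
        · split_ifs <;> omega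
        · intro _ _ hne; rw [if_neg hne]; split_ifs <;> omega
    · have hC : ((Finset.range (t + 1)).filter (fun j => ¬ s j)).card =
          ((Finset.range t).filter (fun j => ¬ s j)).card + 1 := by
        rw [Finset.range_add_one, Finset.filter_insert]; simp [hst]
      have hS : ∑ j ∈ (Finset.range (t + 1)).filter s, g.getD j 0 =
          ∑ j ∈ (Finset.range t).filter s, g.getD j 0 := by
        rw [Finset.range_add_one, Finset.filter_insert, if_neg hst]
      refine ⟨?_, fun _ h => absurd h (by simpa using hst)⟩
      rw [hC, hS, if_neg (show ¬ (0 < t ∧ s (t - 1) ∧ s t) from fun h => hst h.2.2)]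
      set e := ((Finset.range t).filter (fun j => ¬ s j)).card with he
      obtain ⟨k, hk1, hk2⟩ := sorted_split (e + 1) _ hpw
      have hlen : (w.take (rowOffset g t)).length = rowOffset g t := by
        have := rowOffset_le g t
        have := hw.1
        simp; omega
      have hyam := hy (min (rowOffset g t + k) (rowOffset g (t + 1))) e
      have hpre : w.take (min (rowOffset g t + k) (rowOffset g (t + 1))) =
          w.take (rowOffset g t) ++ (x :: (m ++ [y])).take k := by
        rw [← List.take_take, htake, List.take_append, hlen, Nat.add_sub_cancel_left,
          List.take_of_length_le (by omega)]
      rw [hpre, List.count_append, List.count_append, hk1, hk2, ← List.count_append, ← htake]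
        at hyam
      rw [show e + 1 + 1 = e + 2 from rfl]
      omega

lemma delRank_lt (g : List ℕ) (j : ℕ) (hj : j < g.length) : delRank g j < g.length := by
  unfold delRank
  calc _ < (Finset.range g.length).card := by
        apply Finset.card_lt_card
        rw [Finset.filter_ssubset]
        exact ⟨j, by simpa using hj, by simp⟩
    _ = g.length := by simp

lemma delRank_lt_of (g : List ℕ) (i j : ℕ) (hi : i < g.length)
    (h : g.getD j 0 < g.getD i 0 ∨ (g.getD i 0 = g.getD j 0 ∧ i < j)) :
    delRank g i < delRank g j := by
  unfold delRank
  apply Finset.card_lt_card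
  rw [Finset.ssubset_iff_of_subset]
  · refine ⟨i, ?_, by simp⟩
    simp only [Finset.mem_filter, Finset.mem_range]
    exact ⟨hi, h⟩
  · intro l hl
    simp only [Finset.mem_filter, Finset.mem_range] at hl ⊢
    refine ⟨hl.1, ?_⟩
    omega

lemma delRank_lt_iff (g : List ℕ) (i j : ℕ) (hi : i < g.length) (hj : j < g.length)
    (h : delRank g i < delRank g j) : g.getD j 0 ≤ g.getD i 0 := by
  by_contra hc
  have := delRank_lt_of g j i hj (Or.inl (by omega))
  omega

lemma delRank_inj (g : List ℕ) (i j : ℕ) (hi : i < g.length) (hj : j < g.length)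
    (h : delRank g i = delRank g j) : i = j := by
  by_contra hne
  have h1 := delRank_lt_of g i j hi
  have h2 := delRank_lt_of g j i hj
  omega

lemma exists_sort (a g : List ℕ) (ha : a.Pairwise (· ≥ ·)) (hperm : g.Perm a) (j : ℕ)
    (hj : j < g.length) : a.getD (delRank g j) 0 = g.getD j 0 := by
  let f : Fin g.length → Fin g.length := fun j => ⟨delRank g j, delRank_lt g j j.2⟩
  have hf : Function.Injective f := by
    intro i j h
    exact Fin.ext (delRank_inj g i j i.2 j.2 (by simpa [f] using h))
  let σ : Equiv.Perm (Fin g.length) := Equiv.ofBijective f (Finite.injective_iff_bijective.1 hf)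
  have hσ : ∀ i, (σ i : ℕ) = delRank g i := fun i => rfl
  have hp : (List.ofFn (g.get ∘ σ.symm)).Perm a := by
    refine (Equiv.Perm.ofFn_comp_perm σ.symm g.get).trans ?_
    rw [List.ofFn_get]; exact hperm
  have hs : (List.ofFn (g.get ∘ σ.symm)).Pairwise (· ≥ ·) := by
    rw [List.pairwise_ofFn]
    intro r r' hr
    have h := delRank_lt_iff g (σ.symm r) (σ.symm r') (σ.symm r).2 (σ.symm r').2 (by
      rw [← hσ, ← hσ]; simpa using hr)
    simpa [List.getD_eq_getElem?_getD] using h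
  have heq : List.ofFn (g.get ∘ σ.symm) = a := hp.eq_of_pairwise' hs ha
  rw [← heq]
  have hlt := delRank_lt g j hj
  have e : σ.symm ⟨delRank g j, hlt⟩ = ⟨j, hj⟩ := by
    rw [Equiv.symm_apply_eq]; rfl
  rw [List.getD_eq_getElem _ _ (by simpa using hlt), List.getElem_ofFn]
  simp only [Function.comp, e]
  simp [List.getD_eq_getElem?_getD, hj]

lemma image_delRank (g : List ℕ) :
    (Finset.range g.length).image (delRank g) = Finset.range g.length := by
  apply Finset.eq_of_subset_of_card_le
  · intro x hx
    obtain ⟨j, hj, rfl⟩ := Finset.mem_image.1 hx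
    exact Finset.mem_range.2 (delRank_lt g j (Finset.mem_range.1 hj))
  · rw [Finset.card_image_of_injOn]
    intro i hi j hj h
    exact delRank_inj g i j (by simpa using hi) (by simpa using hj) h

lemma sum_transfer (g : List ℕ) (F : ℕ → ℕ) :
    ∑ j ∈ Finset.range g.length, F (delRank g j) = ∑ r ∈ Finset.range g.length, F r := by
  conv_rhs => rw [← image_delRank g]
  rw [Finset.sum_image]
  intro i hi j hj h
  exact delRank_inj g i j (by simpa using hi) (by simpa using hj) h

lemma sum_drop (a : List ℕ) (d : ℕ) :
    (a.drop d).sum = ∑ r ∈ Finset.range a.length, if d ≤ r then a.getD r 0 else 0 := by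
  induction a generalizing d with
  | nil => simp
  | cons x xs ih =>
    rw [List.length_cons, Finset.sum_range_succ']
    rcases d with _ | d
    · have := ih 0
      simp at this ⊢
      rw [this]; ring
    · have := ih d
      simp at this ⊢
      rw [this]

/-- Theorem `ineqcomposition`: let `a` be a partition with parts ≥ 2,
`g` a rearrangement of `a`, `R_g` the connected ribbon with row lengths `g` and overlapping
partition `p^π = ppiList g`, and `nu ∈ [a, (|a|−ℓ(a)+1, ℓ(a)−1)]` a partition.  If
`c_{R_g}^{nu} > 0` then `ν_i ≤ Σ_{q=i}^{ℓ(a)} a_q − p^π_i` for all `1 ≤ i ≤ ℓ(p^π)`. -/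
theorem necessary_inequalities_for_rearranged_ribbon
    (a g nu : List ℕ) (ha : IsPartition a) (h2 : PartsGE a 2)
    (hperm : g.Perm a) (hnu : IsPartition nu)
    (hint : DomLE a nu ∧ DomLE nu [a.sum - (a.length - 1), a.length - 1])
    (hpos : InSupportConn g nu) :
    ∀ i, i < lenp (ppiList g) →
      nu.getD i 0 + (ppiList g).getD i 0 ≤ (a.drop i).sum := by
  intro d hd
  have hd' : d < g.length := by
    refine lt_of_lt_of_le hd ?_
    refine (List.countP_le_length).trans ?_
    simp [ppiList]
  obtain ⟨w, hw, hy, hc⟩ := hpos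
  have hg : ∀ x ∈ g, 2 ≤ x := fun x hx => h2 x (hperm.subset hx)
  have hk := (key g w hg hw hy (fun j => d ≤ delRank g j) g.length le_rfl).1
  have hcard : ((Finset.range g.length).filter (fun j => ¬ d ≤ delRank g j)).card = d := by
    rw [Finset.card_filter, sum_transfer g (fun r => if ¬ d ≤ r then 1 else 0),
      ← Finset.card_filter]
    have : (Finset.range g.length).filter (fun r => ¬ d ≤ r) = Finset.range d := by
      ext r; simp; omega
    rw [this, Finset.card_range]
  have hsum : ∑ j ∈ (Finset.range g.length).filter (fun j => d ≤ delRank g j), g.getD j 0 =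
      (a.drop d).sum := by
    rw [sum_drop, ← hperm.length_eq, ← sum_transfer g (fun r => if d ≤ r then a.getD r 0 else 0),
      Finset.sum_filter]
    refine Finset.sum_congr rfl fun j hj => ?_
    rw [exists_sort a g ha.1 hperm j (Finset.mem_range.1 hj)]
  have htk : w.take (rowOffset g g.length) = w := by
    apply List.take_of_length_le
    simp [rowOffset, hw.1]
  have hpp : (ppiList g).getD d 0 = ((Finset.range (g.length - 1)).filter
      (fun j => d ≤ delRank g j ∧ d ≤ delRank g (j + 1))).card := by
    simp [ppiList, List.getD_eq_getElem?_getD, hd']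
  rw [hcard, hsum, htk, hc.1 d, ← hpp] at hk
  exact hk

end RibbonSupport
end
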